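/- arXiv:1104.4935 — 8 statements merged into one kernel-verified Lean document; each statement's English description precedes it below -/
import Mathlib

section
/- Let A be a C*-algebra possessing a countable left approximate identity, i.e. a sequence (v_k)_{k∈ℕ} in A such that ‖v_k a − a‖ → 0 for every a ∈ A. Then there exists a sequence (u_n)_{n≥0} in A with u_0 = 0, 0 ≤ u_n ≤ u_{n+1} and ‖u_n‖ ≤ 1 for every n, such that ‖a u_n − a‖ → 0 and ‖u_n a − a‖ → 0 for every a ∈ A, and moreover for every a ∈ A, every sequence (η_i)_{i≥1} of complex numbers with |η_i| = 1, and all integers m > n ≥ 0 the following three inequalities hold: (1) ‖∑_{i=n+1}^{m} η_i √(u_i − u_{i−1})‖ ≤ 4; (2) ‖a · ∑_{i=n+1}^{m} η_i √(u_i − u_{i−1})‖ ≤ 4‖a‖; (3) ‖a · ∑_{i=n+1}^{m} η_i √(u_i − u_{i−1})‖² ≤ 10·(max_{n ≤ i ≤ m} ‖a u_i − a‖)·‖a‖ + 2^{−(2n−1)}·‖a‖². -/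
open Filter

namespace Stmt1Aux

variable {A : Type*} [NonUnitalCStarAlgebra A] [PartialOrder A] [StarOrderedRing A]

lemma key1 (h x u : A) (hu : IsSelfAdjoint u) (hn : ‖u‖ ≤ 1) (hx : star x * x ≤ h) :
    ‖x * u - x‖ * ‖x * u - x‖ ≤ 2 * ‖h * u - h‖ := by
  obtain ⟨y, hy⟩ := CStarAlgebra.nonneg_iff_eq_star_mul_self.mp (sub_nonneg.mpr hx)
  have hh : h = star x * x + star y * y := by rw [← hy]; abel
  have hus : star u = u := hu
  have e : star (x * u - x) * (x * u - x) + star (y * u - y) * (y * u - y)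
      = u * (h * u - h) - (h * u - h) := by
    rw [hh]
    simp only [star_sub, star_mul, hus]
    noncomm_ring
  rw [← CStarRing.norm_star_mul_self]
  calc _ ≤ ‖u * (h * u - h) - (h * u - h)‖ := by
        apply CStarAlgebra.norm_le_norm_of_nonneg_of_le (star_mul_self_nonneg _)
        rw [← e]
        exact le_add_of_nonneg_right (star_mul_self_nonneg _)
    _ ≤ ‖u‖ * ‖h * u - h‖ + ‖h * u - h‖ := (norm_sub_le _ _).trans (by gcongr; exact norm_mul_le _ _)
    _ ≤ _ := by nlinarith [norm_nonneg (h * u - h)]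

lemma key2 (h : A) (u : ℕ → A) (hu : ∀ n, IsSelfAdjoint (u n)) (hn : ∀ n, ‖u n‖ ≤ 1)
    (hh : Tendsto (fun n => ‖h * u n - h‖) atTop (nhds 0))
    (x : A) (hx : star x * x ≤ h) : Tendsto (fun n => ‖x * u n - x‖) atTop (nhds 0) := by
  have h1 : Tendsto (fun n => ‖x * u n - x‖ * ‖x * u n - x‖) atTop (nhds 0) :=
    squeeze_zero (fun n => by positivity) (fun n => key1 h x (u n) (hu n) (hn n) hx)
      (by simpa using hh.const_mul 2)
  have h2 := (Real.continuous_sqrt.tendsto 0).comp h1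
  simpa [Function.comp_def, Real.sqrt_mul_self] using h2

lemma exists_h (v : ℕ → A) : ∃ (h : A) (t : ℕ → ℝ), 0 ≤ h ∧ (∀ k, 0 < t k) ∧
    ∀ k, star (t k • star (v k)) * (t k • star (v k)) ≤ h := by
  let t : ℕ → ℝ := fun k => (2 ^ k * (1 + ‖v k‖))⁻¹
  have ht : ∀ k, 0 < t k := fun k => by positivity
  let w : ℕ → A := fun k => star (t k • star (v k)) * (t k • star (v k))
  have hw : ∀ k, 0 ≤ w k := fun k => star_mul_self_nonneg _
  have hb : ∀ k, ‖t k • star (v k)‖ ≤ (1 / 2) ^ k := fun k => by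
    rw [norm_smul, norm_star, Real.norm_of_nonneg (ht k).le]
    simp only [t, mul_inv, one_div, inv_pow, mul_assoc]
    apply mul_le_of_le_one_right (by positivity)
    rw [inv_mul_le_one₀ (by positivity)]
    linarith
  have hs : Summable w := by
    apply Summable.of_norm_bounded (g := fun k => (1 / 2 : ℝ) ^ k) summable_geometric_two
    intro k
    simp only [w]
    rw [CStarRing.norm_star_mul_self]
    have h1 : (1 / 2 : ℝ) ^ k ≤ 1 := pow_le_one₀ (by norm_num) (by norm_num)
    nlinarith [hb k, norm_nonneg (t k • star (v k))]
  exact ⟨∑' k, w k, t, tsum_nonneg hw, ht, fun k => hs.le_tsum k fun j _ => hw j⟩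

lemma key3 (v : ℕ → A) (hv : ∀ a : A, Tendsto (fun k => ‖v k * a - a‖) atTop (nhds 0))
    (u : ℕ → A) (hn : ∀ n, ‖u n‖ ≤ 1)
    (h : ∀ k, Tendsto (fun n => ‖star (v k) * u n - star (v k)‖) atTop (nhds 0)) (a : A) :
    Tendsto (fun n => ‖a * u n - a‖) atTop (nhds 0) := by
  rw [Metric.tendsto_atTop]
  intro ε hε
  obtain ⟨k, hk⟩ := ((hv (star a)).eventually (gt_mem_nhds (show 0 < ε / 4 by positivity))).exists
  have hk' : ‖a * star (v k) - a‖ < ε / 4 := by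
    rw [← norm_star]; simpa using hk
  have h2 : Tendsto (fun n => ‖a‖ * ‖star (v k) * u n - star (v k)‖) atTop (nhds 0) := by
    simpa using (h k).const_mul ‖a‖
  obtain ⟨N, hN⟩ := eventually_atTop.mp
    (h2.eventually (gt_mem_nhds (show 0 < ε / 4 by positivity)))
  refine ⟨N, fun n hnN => ?_⟩
  rw [dist_zero_right, norm_norm]
  have e : a * u n - a = a * (star (v k) * u n - star (v k)) +
      ((a * star (v k) - a) - (a * star (v k) - a) * u n) := by noncomm_ring
  have h3 := norm_mul_le a (star (v k) * u n - star (v k))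
  have h4 := norm_mul_le (a * star (v k) - a) (u n)
  have h5 := norm_sub_le (a * star (v k) - a) ((a * star (v k) - a) * u n)
  have h6 := norm_add_le (a * (star (v k) * u n - star (v k)))
      ((a * star (v k) - a) - (a * star (v k) - a) * u n)
  rw [e]
  have h7 : ‖a * star (v k) - a‖ * ‖u n‖ ≤ ‖a * star (v k) - a‖ :=
    mul_le_of_le_one_right (norm_nonneg _) (hn n)
  have h8 := hN n hnN
  linarith

noncomputable def f (n : ℕ) (x : ℝ) : ℝ := max 0 (min 1 ((2 ^ n - 1) * x - 1))

lemma f_cont (n : ℕ) : Continuous (f n) := by unfold f; fun_prop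
lemma f_zero (n : ℕ) : f n 0 = 0 := by simp [f]
lemma f_nonneg (n : ℕ) (x : ℝ) : 0 ≤ f n x := le_max_left _ _
lemma f_le_one (n : ℕ) (x : ℝ) : f n x ≤ 1 := by simp [f]
lemma f_z (x : ℝ) : f 0 x = 0 := by simp [f]

lemma f_succ (n : ℕ) (x : ℝ) : f n x = 0 ∨ f (n + 1) x = 1 := by
  by_cases hx : (2 ^ n - 1) * x ≤ 1
  · left
    exact max_eq_left ((min_le_right _ _).trans (by linarith))
  · right
    have h1 : (1 : ℝ) ≤ 2 ^ n := one_le_pow₀ (by norm_num)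
    push Not at hx
    have hx0 : 0 < x := by
      by_contra hc
      nlinarith
    have : 1 ≤ (2 ^ (n + 1) - 1) * x - 1 := by rw [pow_succ]; nlinarith
    simp [f, min_eq_left this]

lemma f_mono (x : ℝ) : Monotone (fun n => f n x) := monotone_nat_of_le_succ fun n => by
  rcases f_succ n x with h | h
  · simp only [h]; exact f_nonneg _ _
  · simp only [h]; exact f_le_one _ _

lemma f_approx (n : ℕ) (hn : 1 ≤ n) (x : ℝ) (hx : 0 ≤ x) : ‖x * f n x - x‖ ≤ 4 * (1 / 2) ^ n := by
  have h1 : (2 : ℝ) ^ n = 2 * 2 ^ (n - 1) := by rw [← pow_succ']; congr 1; omega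
  have h0 : (1 : ℝ) ≤ 2 ^ (n - 1) := one_le_pow₀ (by norm_num)
  have h2 : (1 / 2 : ℝ) ^ n * 2 ^ n = 1 := by rw [← mul_pow]; norm_num
  have h3 : (0 : ℝ) < (1 / 2) ^ n := by positivity
  by_cases hc : 2 ≤ (2 ^ n - 1) * x
  · have : f n x = 1 := by simp [f, min_eq_left (show 1 ≤ (2 ^ n - 1) * x - 1 by linarith)]
    rw [this]; simp
  · push Not at hc
    have h4 : 2 ^ n * x ≤ 4 := by nlinarith
    have h5 : x ≤ 4 * (1 / 2) ^ n := by
      calc x = (1 / 2) ^ n * (2 ^ n * x) := by rw [← mul_assoc, h2, one_mul]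
        _ ≤ (1 / 2) ^ n * 4 := by gcongr
        _ = _ := mul_comm _ _
    rw [Real.norm_eq_abs, abs_le]
    have := f_nonneg n x
    have := f_le_one n x
    constructor <;> nlinarith

noncomputable def g (i : ℕ) (x : ℝ) : ℝ := √(f i x - f (i - 1) x)

lemma g_cont (n : ℕ) : Continuous (g n) := by
  have := f_cont n
  have := f_cont (n - 1)
  unfold g; fun_prop
lemma g_zero (n : ℕ) : g n 0 = 0 := by simp [g, f_zero]

lemma g_mul (i j : ℕ) (hij : i + 2 ≤ j) (x : ℝ) : g i x * g j x = 0 := by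
  rcases f_succ i x with h | h
  · have := f_mono x (show i - 1 ≤ i by omega)
    have h2 := f_nonneg (i - 1) x
    simp only at this
    simp [g, show f (i - 1) x = 0 by linarith, h]
  · have h1 := f_mono x (show i + 1 ≤ j - 1 by omega)
    have h2 := f_mono x (show j - 1 ≤ j by omega)
    have h3 := f_le_one j x
    simp only at h1 h2
    simp [g, show f (j - 1) x = 1 by linarith, show f j x = 1 by linarith]

/-- Abstract orthogonal sum. -/
lemma orth (s : Finset ℕ) (e : ℕ → A) (he : ∀ i, star (e i) = e i) (η : ℕ → ℂ)
    (hη : ∀ i, ‖η i‖ = 1) (ho : ∀ i ∈ s, ∀ j ∈ s, i ≠ j → e i * e j = 0) :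
    (∑ i ∈ s, η i • e i) * star (∑ i ∈ s, η i • e i) = ∑ i ∈ s, e i * e i := by
  rw [star_sum, Finset.sum_mul_sum]
  refine Finset.sum_congr rfl fun i hi => ?_
  rw [Finset.sum_eq_single i]
  · rw [star_smul, he, smul_mul_smul_comm]
    have : η i * star (η i) = 1 := by
      have := Complex.mul_conj (η i)
      rw [Complex.normSq_eq_norm_sq, hη] at this
      simpa using this
    rw [this, one_smul]
  · intro j hj hne
    rw [star_smul, he, smul_mul_smul_comm, ho i hi j hj hne.symm, smul_zero]
  · exact fun h => absurd hi h

lemma sum_le (s : Finset ℕ) (e : ℕ → A) (he : ∀ i, star (e i) = e i) (η : ℕ → ℂ)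
    (hη : ∀ i, ‖η i‖ = 1) (ho : ∀ i j, i + 2 ≤ j → e i * e j = 0) :
    (∑ i ∈ s, η i • e i) * star (∑ i ∈ s, η i • e i) ≤ (2 : ℕ) • ∑ i ∈ s, e i * e i := by
  have ho' : ∀ i j, j + 2 ≤ i → e i * e j = 0 := fun i j hij => by
    have := congrArg star (ho j i hij)
    simpa [he] using this
  have hE := orth (s.filter Even) e he η hη (fun i hi j hj hne => by
    obtain ⟨a, ha⟩ := (Finset.mem_filter.mp hi).2
    obtain ⟨b, hb⟩ := (Finset.mem_filter.mp hj).2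
    rcases lt_or_gt_of_ne hne with h | h
    · exact ho _ _ (by omega)
    · exact ho' _ _ (by omega))
  have hO := orth (s.filter (fun x => ¬ Even x)) e he η hη (fun i hi j hj hne => by
    obtain ⟨a, ha⟩ := Nat.not_even_iff_odd.mp (Finset.mem_filter.mp hi).2
    obtain ⟨b, hb⟩ := Nat.not_even_iff_odd.mp (Finset.mem_filter.mp hj).2
    rcases lt_or_gt_of_ne hne with h | h
    · exact ho _ _ (by omega)
    · exact ho' _ _ (by omega))
  rw [← Finset.sum_filter_add_sum_filter_not s Even (fun i => e i * e i), ← hE, ← hO,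
    ← Finset.sum_filter_add_sum_filter_not s Even (fun i => η i • e i)]
  generalize ∑ i ∈ s.filter Even, η i • e i = E
  generalize ∑ i ∈ s.filter (fun x => ¬ Even x), η i • e i = O
  rw [← sub_nonneg]
  have : (2 : ℕ) • (E * star E + O * star O) - (E + O) * star (E + O) =
      (E - O) * star (E - O) := by
    simp only [star_add, star_sub]
    noncomm_ring
  rw [this]
  exact mul_star_self_nonneg _

end Stmt1Aux

open Stmt1Aux in
/-- Every C*-algebra with a countable left approximate identity possesses a countable
increasing approximate identity `(uₙ)` bounded by one (with `u₀ = 0`) satisfying, for any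
`a ∈ A`, any unimodular scalars `(ηᵢ)` and any integers `m > n ≥ 0`:
(1) `‖∑_{i=n+1}^m ηᵢ √(uᵢ − uᵢ₋₁)‖ ≤ 4`;
(2) `‖a ∑_{i=n+1}^m ηᵢ √(uᵢ − uᵢ₋₁)‖ ≤ 4‖a‖`;
(3) `‖a ∑_{i=n+1}^m ηᵢ √(uᵢ − uᵢ₋₁)‖² ≤ 10 max_{n≤i≤m} ‖a uᵢ − a‖ ‖a‖ + 2^{1−2n} ‖a‖²`. -/
theorem stmt1 {A : Type*} [NonUnitalCStarAlgebra A] [PartialOrder A] [StarOrderedRing A]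
    (v : ℕ → A) (hv : ∀ a : A, Tendsto (fun k => ‖v k * a - a‖) atTop (nhds 0)) :
    ∃ u : ℕ → A, u 0 = 0 ∧ (∀ n, 0 ≤ u n) ∧ (∀ n, u n ≤ u (n + 1)) ∧ (∀ n, ‖u n‖ ≤ 1) ∧
      (∀ a : A, Tendsto (fun n => ‖a * u n - a‖) atTop (nhds 0)) ∧
      (∀ a : A, Tendsto (fun n => ‖u n * a - a‖) atTop (nhds 0)) ∧
      (∀ (a : A) (η : ℕ → ℂ), (∀ i, ‖η i‖ = 1) → ∀ (n m : ℕ) (hnm : n < m),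
        ‖∑ i ∈ Finset.Icc (n + 1) m, η i • CFC.sqrt (u i - u (i - 1))‖ ≤ 4 ∧
        ‖a * ∑ i ∈ Finset.Icc (n + 1) m, η i • CFC.sqrt (u i - u (i - 1))‖ ≤ 4 * ‖a‖ ∧
        ‖a * ∑ i ∈ Finset.Icc (n + 1) m, η i • CFC.sqrt (u i - u (i - 1))‖ ^ 2 ≤
          10 * ((Finset.Icc n m).sup' (Finset.nonempty_Icc.mpr hnm.le)
              fun i => ‖a * u i - a‖) * ‖a‖ +
            (2 : ℝ) ^ ((1 : ℤ) - 2 * (n : ℤ)) * ‖a‖ ^ 2) := by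
  obtain ⟨h, t, h0, ht, hle⟩ := exists_h v
  have hsa : IsSelfAdjoint h := .of_nonneg h0
  let u : ℕ → A := fun n => cfcₙ (f n) h
  have hmono' : ∀ i j, i ≤ j → u i ≤ u j := fun i j hij =>
    cfcₙ_mono (fun x _ => f_mono x hij) (f_cont i).continuousOn (f_cont j).continuousOn
      (f_zero i) (f_zero j)
  have hpos : ∀ n, 0 ≤ u n := fun n => cfcₙ_nonneg fun x _ => f_nonneg n x
  have hnorm : ∀ n, ‖u n‖ ≤ 1 := fun n => norm_cfcₙ_le fun x _ => by
    rw [Real.norm_of_nonneg (f_nonneg n x)]; exact f_le_one n x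
  have hus : ∀ n, IsSelfAdjoint (u n) := fun n => .of_nonneg (hpos n)
  have hu0 : u 0 = 0 := by
    have : f 0 = fun _ => 0 := funext f_z
    simp only [u, this]
    exact cfcₙ_const_zero ℝ h
  have hh : Tendsto (fun n => ‖h * u n - h‖) atTop (nhds 0) := by
    have hb : Tendsto (fun n : ℕ => 4 * (1 / 2 : ℝ) ^ n) atTop (nhds 0) := by
      simpa using (tendsto_pow_atTop_nhds_zero_of_lt_one (r := (1 / 2 : ℝ))
        (by norm_num) (by norm_num)).const_mul 4
    refine squeeze_zero' (Eventually.of_forall fun n => norm_nonneg _) ?_ hb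
    filter_upwards [eventually_ge_atTop 1] with n hn
    have e : h * u n - h = cfcₙ (fun x : ℝ => x * f n x - x) h := by
      have hc := f_cont n
      have hz := f_zero n
      rw [cfcₙ_sub (fun x : ℝ => x * f n x) (fun x => x) h
          (by fun_prop) (by simp) (by fun_prop) rfl,
        cfcₙ_mul (fun x : ℝ => x) (f n) h (by fun_prop) rfl (by fun_prop) hz,
        cfcₙ_id' ℝ h hsa]
    rw [e]
    exact norm_cfcₙ_le fun x hx => f_approx n hn x (quasispectrum_nonneg_of_nonneg h h0 x hx)
  have hright : ∀ a : A, Tendsto (fun n => ‖a * u n - a‖) atTop (nhds 0) := by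
    refine key3 v hv u hnorm fun k => ?_
    have h1 := (key2 h u hus hnorm hh _ (hle k)).const_mul (t k)⁻¹
    rw [mul_zero] at h1
    refine h1.congr fun n => ?_
    rw [smul_mul_assoc, ← smul_sub, norm_smul, Real.norm_of_nonneg (ht k).le,
      inv_mul_cancel_left₀ (ht k).ne']
  have hleft : ∀ a : A, Tendsto (fun n => ‖u n * a - a‖) atTop (nhds 0) := fun a => by
    refine (hright (star a)).congr fun n => ?_
    rw [← norm_star]
    simp [(hus n).star_eq]
  refine ⟨u, hu0, hpos, fun n => hmono' _ _ (Nat.le_succ n), hnorm, hright, hleft, ?_⟩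
  intro a η hη n m hnm
  let e : ℕ → A := fun i => cfcₙ (g i) h
  have he0 : ∀ i, 0 ≤ e i := fun i => cfcₙ_nonneg fun x _ => Real.sqrt_nonneg _
  have hee : ∀ i, e i * e i = u i - u (i - 1) := fun i => by
    simp only [e, u]
    rw [← cfcₙ_mul (g i) (g i) h (g_cont i).continuousOn (g_zero i) (g_cont i).continuousOn
        (g_zero i),
      ← cfcₙ_sub (f i) (f (i - 1)) h (f_cont i).continuousOn (f_zero i)
        (f_cont _).continuousOn (f_zero _)]
    congr 1
    funext x
    exact Real.mul_self_sqrt (sub_nonneg.mpr (f_mono x (Nat.sub_le i 1)))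
  have hsq : ∀ i, CFC.sqrt (u i - u (i - 1)) = e i := fun i =>
    CFC.sqrt_unique (hee i) (he0 i)
  have ho : ∀ i j, i + 2 ≤ j → e i * e j = 0 := fun i j hij => by
    simp only [e]
    rw [← cfcₙ_mul (g i) (g j) h (g_cont i).continuousOn (g_zero i) (g_cont j).continuousOn
        (g_zero j)]
    simp only [g_mul i j hij]
    exact cfcₙ_const_zero ℝ h
  have hes : ∀ i, star (e i) = e i := fun i => (IsSelfAdjoint.of_nonneg (he0 i)).star_eq
  have hS := sum_le (Finset.Icc (n + 1) m) e hes η hη ho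
  have htel : ∑ i ∈ Finset.Icc (n + 1) m, e i * e i = u m - u n := by
    simp only [hee]
    clear hS
    induction m, hnm using Nat.le_induction with
    | base => simp
    | succ k hk ih =>
      rw [Finset.sum_Icc_succ_top (by omega), ih]
      simp
  rw [htel] at hS
  simp only [hsq]
  generalize ∑ i ∈ Finset.Icc (n + 1) m, η i • e i = S at hS
  have hd0 : 0 ≤ u m - u n := sub_nonneg.mpr (hmono' _ _ hnm.le)
  have hd1 : ‖u m - u n‖ ≤ 1 :=
    (CStarAlgebra.norm_le_norm_of_nonneg_of_le hd0 (sub_le_self _ (hpos n))).trans (hnorm m)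
  have hS2 : ‖S‖ * ‖S‖ ≤ 2 := by
    rw [← CStarRing.norm_self_mul_star]
    refine (CStarAlgebra.norm_le_norm_of_nonneg_of_le (mul_star_self_nonneg S) hS).trans ?_
    refine (norm_nsmul_le).trans ?_
    push_cast
    linarith
  have hS4 : ‖S‖ ≤ 4 := by nlinarith [norm_nonneg S]
  refine ⟨hS4, ?_, ?_⟩
  · calc ‖a * S‖ ≤ ‖a‖ * ‖S‖ := norm_mul_le _ _
      _ ≤ ‖a‖ * 4 := by gcongr
      _ = _ := mul_comm _ _
  · set M := (Finset.Icc n m).sup' (Finset.nonempty_Icc.mpr hnm.le) fun i => ‖a * u i - a‖ with hM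
    have hMn : ‖a * u n - a‖ ≤ M :=
      Finset.le_sup' (fun i => ‖a * u i - a‖) (Finset.mem_Icc.mpr ⟨le_rfl, hnm.le⟩)
    have hMm : ‖a * u m - a‖ ≤ M :=
      Finset.le_sup' (fun i => ‖a * u i - a‖) (Finset.mem_Icc.mpr ⟨hnm.le, le_rfl⟩)
    have hM0 : 0 ≤ M := (norm_nonneg _).trans hMn
    have h1 : ‖a * (u m - u n)‖ ≤ 2 * M := by
      have : a * (u m - u n) = (a * u m - a) - (a * u n - a) := by noncomm_ring
      rw [this]
      linarith [norm_sub_le (a * u m - a) (a * u n - a)]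
    have h2 : ‖a * S‖ ^ 2 ≤ 4 * M * ‖a‖ := by
      rw [sq, ← CStarRing.norm_self_mul_star]
      have e1 : a * S * star (a * S) = a * (S * star S) * star a := by
        simp only [star_mul, mul_assoc]
      have e2 : a * ((2 : ℕ) • (u m - u n)) * star a = (2 : ℕ) • (a * (u m - u n) * star a) := by
        noncomm_ring
      have h3 := star_right_conjugate_le_conjugate hS a
      rw [e2, ← e1] at h3
      refine (CStarAlgebra.norm_le_norm_of_nonneg_of_le (mul_star_self_nonneg _) h3).trans ?_
      refine (norm_nsmul_le).trans ?_
      have h4 := norm_mul_le (a * (u m - u n)) (star a)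
      rw [norm_star] at h4
      push_cast
      nlinarith [norm_nonneg a]
    have h5 : 0 ≤ M * ‖a‖ := by positivity
    have h6 : 0 ≤ (2 : ℝ) ^ ((1 : ℤ) - 2 * (n : ℤ)) * ‖a‖ ^ 2 := by positivity
    nlinarith
end

section
/- Let Ω be a locally compact Hausdorff space satisfying the Suslin condition. Then the following conditions are equivalent: (a) Ω is paracompact; (b) Ω is σ-compact; (c) Ω is a Lindelöf space (every open cover of Ω has a countable subcover); (d) C₀(Ω, ℂ) contains a strictly positive element, i.e. a function f ∈ C₀(Ω, ℂ) taking real values with f(t) > 0 for every t ∈ Ω; (e) C₀(Ω, ℂ) has a sequential approximate identity bounded by one, i.e. a sequence (e_n) in C₀(Ω, ℂ) with ‖e_n‖ ≤ 1 for all n and ‖g·e_n − g‖ → 0 for every g ∈ C₀(Ω, ℂ). -/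
open ZeroAtInfty Filter

/-- paracompact + Suslin + locally compact gives sigma-compact -/
theorem aux_ab {Ω : Type*} [TopologicalSpace Ω] [LocallyCompactSpace Ω] [T2Space Ω]
    (hSuslin : ∀ S : Set (Set Ω), (∀ U ∈ S, IsOpen U ∧ U.Nonempty) →
      S.PairwiseDisjoint id → S.Countable) (hp : ParacompactSpace Ω) : SigmaCompactSpace Ω := by
  choose K hKc hKn using fun x : Ω => exists_compact_mem_nhds x
  obtain ⟨V, hVo, hVc, hVf, hVs⟩ := precise_refinement (fun x => interior (K x))
    (fun x => isOpen_interior) (by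
      ext x; simp only [Set.mem_iUnion, Set.mem_univ, iff_true]
      exact ⟨x, mem_interior_iff_mem_nhds.2 (hKn x)⟩)
  let P : Set (Set (Set Ω)) := {S | (∀ U ∈ S, IsOpen U ∧ U.Nonempty ∧
      {i | (V i ∩ U).Nonempty}.Finite) ∧ S.PairwiseDisjoint id}
  obtain ⟨M, hM⟩ := zorn_subset P (by
    intro c hc hch
    refine ⟨⋃₀ c, ⟨?_, ?_⟩, fun s hs => Set.subset_sUnion_of_mem hs⟩
    · rintro U ⟨s, hs, hU⟩
      exact (hc hs).1 U hU
    · rw [Set.pairwiseDisjoint_sUnion hch.directedOn]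
      exact fun s hs => (hc hs).2)
  have hMP : M ∈ P := hM.prop
  have hMc : M.Countable := hSuslin M (fun U hU => ⟨(hMP.1 U hU).1, (hMP.1 U hU).2.1⟩) hMP.2
  have hcount : {i | (V i).Nonempty}.Countable := by
    refine (hMc.biUnion (t := fun U _ => {i | (V i ∩ U).Nonempty})
      (fun U hU => (hMP.1 U hU).2.2.countable)).mono ?_
    rintro i ⟨x, hx⟩
    by_contra hcon
    simp only [Set.mem_iUnion, Set.mem_setOf_eq, not_exists, Set.not_nonempty_iff_eq_empty] at hcon
    obtain ⟨t, ht, htf⟩ := hVf x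
    let W := V i ∩ interior t
    have hxW : x ∈ W := ⟨hx, mem_interior_iff_mem_nhds.2 ht⟩
    have hWP : insert W M ∈ P := by
      refine ⟨?_, ?_⟩
      · rintro U (rfl | hU)
        · refine ⟨(hVo i).inter isOpen_interior, ⟨x, hxW⟩, htf.subset ?_⟩
          rintro j ⟨y, hy1, hy2⟩
          exact ⟨y, hy1, interior_subset hy2.2⟩
        · exact hMP.1 U hU
      · refine hMP.2.insert fun U hU _ => ?_
        have h := hcon U hU
        exact (Set.disjoint_iff_inter_eq_empty.2 h).mono_left Set.inter_subset_left
    have hWM : W ∈ M := hM.le_of_ge hWP (Set.subset_insert _ _) (Set.mem_insert _ _)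
    have : x ∈ V i ∩ W := ⟨hx, hxW⟩
    rw [hcon W hWM] at this
    exact this
  refine isSigmaCompact_univ_iff.1 ?_
  have : (Set.univ : Set Ω) = ⋃ i ∈ {i | (V i).Nonempty}, K i := by
    refine (Set.eq_univ_of_forall fun x => ?_).symm
    obtain ⟨i, hi⟩ := Set.mem_iUnion.1 (hVc.ge (Set.mem_univ x))
    exact Set.mem_biUnion (show i ∈ {i | (V i).Nonempty} from ⟨x, hi⟩) (interior_subset (hVs i hi))
  rw [this]
  exact isSigmaCompact_biUnion hcount fun i _ => (hKc i).isSigmaCompact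

theorem aux_cover {Ω : Type*} [TopologicalSpace Ω] (e : ℕ → C₀(Ω, ℂ))
    (h : ∀ t, ∃ n, e n t ≠ 0) : SigmaCompactSpace Ω := by
  choose K hK hs using fun p : ℕ × ℕ => mem_cocompact.1
    ((zero_at_infty (e p.1)).eventually (Metric.ball_mem_nhds (0:ℂ) (Nat.one_div_pos_of_nat (n := p.2) (α := ℝ))))
  refine isSigmaCompact_univ_iff.1 ?_
  have : (Set.univ : Set Ω) = ⋃ p, K p := by
    refine (Set.eq_univ_of_forall fun x => ?_).symm
    obtain ⟨n, hn⟩ := h x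
    obtain ⟨m, hm⟩ := exists_nat_one_div_lt (norm_pos_iff.2 hn)
    refine Set.mem_iUnion.2 ⟨(n, m), ?_⟩
    by_contra hx
    have := hs (n, m) hx
    simp only [Set.mem_setOf_eq, Metric.mem_ball, dist_zero_right] at this
    exact absurd this (not_lt.2 hm.le)
  rw [this]
  exact isSigmaCompact_iUnion_of_isCompact _ hK

theorem aux_bump {Ω : Type*} [TopologicalSpace Ω] [LocallyCompactSpace Ω] [T2Space Ω]
    {K : Set Ω} (hK : IsCompact K) :
    ∃ f : C₀(Ω, ℂ), (∀ t ∈ K, f t = 1) ∧ ∀ t, ∃ r : ℝ, f t = r ∧ 0 ≤ r ∧ r ≤ 1 := by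
  obtain ⟨f, h1, -, hc, h01⟩ := exists_continuous_one_zero_of_isCompact hK isClosed_empty
    (Set.disjoint_empty K)
  have hc' : HasCompactSupport (fun t => (f t : ℂ)) := hc.comp_left (g := Complex.ofReal) rfl
  exact ⟨⟨⟨fun t => (f t : ℂ), Complex.continuous_ofReal.comp f.continuous⟩,
    hc'.is_zero_at_infty⟩,
    fun t ht => by
      show (f t : ℂ) = 1
      simp [h1 ht], fun t => ⟨f t, rfl, (h01 t).1, (h01 t).2⟩⟩

theorem aux_le {Ω : Type*} [TopologicalSpace Ω] (f : C₀(Ω, ℂ)) {C : ℝ} (hC : 0 ≤ C)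
    (h : ∀ t, ‖f t‖ ≤ C) : ‖f‖ ≤ C := by
  rw [← ZeroAtInftyContinuousMap.norm_toBCF_eq_norm]
  exact (BoundedContinuousFunction.norm_le hC).2 h

theorem aux_apply_le {Ω : Type*} [TopologicalSpace Ω] (f : C₀(Ω, ℂ)) (t : Ω) : ‖f t‖ ≤ ‖f‖ := by
  rw [← ZeroAtInftyContinuousMap.norm_toBCF_eq_norm]
  exact f.toBCF.norm_coe_le_norm t

theorem aux_seq {Ω : Type*} [TopologicalSpace Ω] [LocallyCompactSpace Ω] [T2Space Ω]
    [SigmaCompactSpace Ω] :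
    ∃ e : ℕ → C₀(Ω, ℂ), (∀ n, ‖e n‖ ≤ 1) ∧ (∀ n t, (e n t).im = 0 ∧ 0 ≤ (e n t).re) ∧
      (∀ t, ∃ n, e n t = 1) ∧
        ∀ g : C₀(Ω, ℂ), Tendsto (fun n => ‖g * e n - g‖) atTop (nhds 0) := by
  let K := CompactExhaustion.choice Ω
  choose e h1 h01 using fun n => aux_bump (K.isCompact n)
  refine ⟨e, fun n => aux_le _ zero_le_one fun t => ?_, fun n t => ?_, fun t => ?_, fun g => ?_⟩
  · obtain ⟨r, hr, h0, h1⟩ := h01 n t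
    rw [hr, Complex.norm_real, Real.norm_of_nonneg h0]; exact h1
  · obtain ⟨r, hr, h0, h1⟩ := h01 n t
    rw [hr]; exact ⟨rfl, h0⟩
  · exact ⟨K.find t, h1 _ _ (K.mem_find t)⟩
  · rw [Metric.tendsto_atTop]
    intro ε hε
    obtain ⟨C, hC, hs⟩ := mem_cocompact.1
      ((zero_at_infty g).eventually (Metric.ball_mem_nhds (0:ℂ) (half_pos hε)))
    obtain ⟨N, hN⟩ := K.exists_superset_of_isCompact hC
    refine ⟨N, fun n hn => ?_⟩
    rw [dist_zero_right, norm_norm]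
    refine lt_of_le_of_lt (aux_le _ (half_pos hε).le fun t => ?_) (half_lt_self hε)
    simp only [ZeroAtInftyContinuousMap.sub_apply, ZeroAtInftyContinuousMap.mul_apply]
    by_cases ht : t ∈ C
    · rw [h1 n t (K.subset hn (hN ht))]; simpa using (half_pos hε).le
    · have hg := hs ht
      simp only [Set.mem_setOf_eq, Metric.mem_ball, dist_zero_right] at hg
      obtain ⟨r, hr, h0, h1⟩ := h01 n t
      have : g t * e n t - g t = g t * ((r - 1 : ℝ) : ℂ) := by rw [hr]; push_cast; ring
      rw [this, norm_mul, Complex.norm_real, Real.norm_eq_abs]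
      have : |r - 1| ≤ 1 := abs_le.2 ⟨by linarith, by linarith⟩
      nlinarith [norm_nonneg (g t)]

theorem aux_pos {Ω : Type*} [TopologicalSpace Ω] (e : ℕ → C₀(Ω, ℂ)) (he : ∀ n, ‖e n‖ ≤ 1)
    (h0 : ∀ n t, (e n t).im = 0 ∧ 0 ≤ (e n t).re) (h1 : ∀ t, ∃ n, e n t = 1) :
    ∃ f : C₀(Ω, ℂ), (∀ t, (f t).im = 0) ∧ ∀ t, 0 < (f t).re := by
  have hs : Summable fun n => ((1/2 : ℂ)^n) • e n := by
    refine Summable.of_norm_bounded (g := fun n => (1/2 : ℝ)^n) summable_geometric_two fun n => ?_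
    rw [norm_smul, norm_pow]
    have : ‖(1/2 : ℂ)‖ = 1/2 := by simp
    rw [this]
    exact mul_le_of_le_one_right (by positivity) (he n)
  obtain ⟨f, hf⟩ := hs
  have hft : ∀ t, HasSum (fun n => ((1/2 : ℂ)^n) * e n t) (f t) := fun t => by
    let ev : C₀(Ω, ℂ) →+ ℂ := ⟨⟨fun g => g t, rfl⟩, fun _ _ => rfl⟩
    have hev : Continuous ev := AddMonoidHomClass.continuous_of_bound ev 1
      (fun g => by rw [one_mul]; exact aux_apply_le g t)
    exact hf.map ev hev
  have key : ∀ n t, ((1/2 : ℂ)^n) * e n t = (((1/2 : ℝ)^n * (e n t).re : ℝ) : ℂ) := fun n t => by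
    have : e n t = ((e n t).re : ℂ) := Complex.ext rfl (by simp [(h0 n t).1])
    conv_lhs => rw [this]
    push_cast; ring
  simp only [key] at hft
  refine ⟨f, fun t => ?_, fun t => ?_⟩
  · have := Complex.hasSum_im (hft t)
    simp only [Complex.ofReal_im] at this
    exact this.unique hasSum_zero
  · have := Complex.hasSum_re (hft t)
    simp only [Complex.ofReal_re] at this
    obtain ⟨n, hn⟩ := h1 t
    have h2 := le_hasSum this n fun j _ => mul_nonneg (by positivity) (h0 j t).2
    refine lt_of_lt_of_le ?_ h2
    rw [hn]; simp

/-- For a locally compact Hausdorff space `Ω` satisfying the Suslin condition, the following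
are equivalent: `Ω` is paracompact; `Ω` is σ-compact; `Ω` is Lindelöf; `C₀(Ω, ℂ)` contains a
strictly positive (real-valued) function; `C₀(Ω, ℂ)` has a sequential approximate identity
bounded by one. -/
theorem stmt2 {Ω : Type*} [TopologicalSpace Ω] [LocallyCompactSpace Ω] [T2Space Ω]
    (hSuslin : ∀ S : Set (Set Ω), (∀ U ∈ S, IsOpen U ∧ U.Nonempty) →
      S.PairwiseDisjoint id → S.Countable) :
    List.TFAE [ParacompactSpace Ω,
      SigmaCompactSpace Ω,
      LindelofSpace Ω,
      ∃ f : C₀(Ω, ℂ), (∀ t, (f t).im = 0) ∧ ∀ t, 0 < (f t).re,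
      ∃ e : ℕ → C₀(Ω, ℂ), (∀ n, ‖e n‖ ≤ 1) ∧
        ∀ g : C₀(Ω, ℂ), Tendsto (fun n => ‖g * e n - g‖) atTop (nhds 0)] := by
  tfae_have 1 → 2 := aux_ab hSuslin
  tfae_have 2 → 1 := fun _ => inferInstance
  tfae_have 2 → 3 := fun _ => inferInstance
  tfae_have 3 → 2 := fun _ => by
    choose K hKc hKn using fun x : Ω => exists_compact_mem_nhds x
    obtain ⟨t, ht, htu⟩ := LindelofSpace.elim_nhds_subcover K hKn
    refine isSigmaCompact_univ_iff.1 ?_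
    rw [← htu]
    exact isSigmaCompact_biUnion ht fun i _ => (hKc i).isSigmaCompact
  tfae_have 2 → 4 := fun _ => by
    obtain ⟨e, he, h0, h1, -⟩ := aux_seq (Ω := Ω)
    exact aux_pos e he h0 h1
  tfae_have 4 → 2 := by
    rintro ⟨f, -, hf⟩
    refine aux_cover (fun _ => f) fun t => ⟨0, fun h => ?_⟩
    have := hf t
    rw [h] at this
    simp at this
  tfae_have 2 → 5 := fun _ => by
    obtain ⟨e, he, -, -, h⟩ := aux_seq (Ω := Ω)
    exact ⟨e, he, h⟩
  tfae_have 5 → 2 := by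
    rintro ⟨e, -, h⟩
    refine aux_cover e fun t => ?_
    by_contra! hcon
    obtain ⟨g, hg, -⟩ := aux_bump (isCompact_singleton (x := t))
    have h1 : ∀ n, 1 ≤ ‖g * e n - g‖ := fun n => by
      refine le_trans ?_ (aux_apply_le _ t)
      simp [hcon n, hg t rfl]
    have := ge_of_tendsto' (h g) h1
    norm_num at this
  tfae_finish
end

section
/- Let H be a separable complex Hilbert space and let A be a commutative C*-subalgebra of B(H), i.e. a commutative, norm-closed, star-closed subalgebra of the algebra of bounded linear operators on H. Then the spectrum of A satisfies the Suslin condition. -/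
open WeakDual in
open scoped CStarAlgebra in
theorem suslin_aux_open {A : Type*} [NonUnitalCommCStarAlgebra A]
    (U : Set (characterSpace ℂ A)) (hU : IsOpen U) :
    IsOpen {ψ : characterSpace ℂ A⁺¹ | ∃ φ ∈ U, ∀ a : A, ψ (Unitization.inr a) = φ a} := by
  obtain ⟨W, hW, rfl⟩ := isOpen_induced_iff.1 hU
  let ι : A →L[ℂ] A⁺¹ := ⟨(Unitization.inrNonUnitalAlgHom ℂ A : A →ₗ[ℂ] A⁺¹),
    (Unitization.isometry_inr (𝕜 := ℂ) (A := A)).continuous⟩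
  have hι : ∀ a : A, ι a = (Unitization.inr a : A⁺¹) := fun a => rfl
  let r : characterSpace ℂ A⁺¹ → WeakDual ℂ A := fun ψ =>
    StrongDual.toWeakDual ((CharacterSpace.toCLM ψ).comp ι)
  have hr : ∀ ψ a, r ψ a = ψ (Unitization.inr a) := fun ψ a => rfl
  have hev : ∀ b : A⁺¹, Continuous fun ψ : characterSpace ℂ A⁺¹ => ψ b := fun b =>
    map_continuous (gelfandTransform ℂ A⁺¹ b)
  have hrc : Continuous r := WeakDual.continuous_of_continuous_eval fun a => hev _
  have : {ψ : characterSpace ℂ A⁺¹ | ∃ φ ∈ (Subtype.val ⁻¹' W : Set (characterSpace ℂ A)),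
      ∀ a : A, ψ (Unitization.inr a) = φ a} =
      r ⁻¹' W ∩ ⋃ a : A, {ψ | ψ (Unitization.inr a) ≠ 0} := by
    ext ψ
    simp only [Set.mem_setOf_eq, Set.mem_inter_iff, Set.mem_iUnion, Set.mem_preimage]
    constructor
    · rintro ⟨φ, hφ, h⟩
      have e : r ψ = φ.1 := by
        refine DFunLike.ext _ _ fun a => ?_
        rw [hr, h]; rfl
      refine ⟨e ▸ hφ, ?_⟩
      by_contra! h0
      apply φ.2.1
      refine DFunLike.ext _ _ fun a => ?_
      change φ a = 0
      rw [← h, h0]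
    · rintro ⟨h1, a, ha⟩
      refine ⟨⟨r ψ, ?_, ?_⟩, h1, fun a => rfl⟩
      · intro h
        apply ha
        rw [← hr, h]; rfl
      · intro x y
        rw [hr, hr, hr, Unitization.inr_mul, map_mul]
  rw [this]
  exact (hW.preimage hrc).inter (isOpen_iUnion fun a => isOpen_ne_fun (hev _) continuous_const)

open WeakDual in
open scoped CStarAlgebra in
theorem suslin_aux_fun {A : Type*} [NonUnitalCommCStarAlgebra A]
    (U : Set (characterSpace ℂ A)) (hU : IsOpen U) (hne : U.Nonempty) :
    ∃ a : A, a ≠ 0 ∧ ∀ ψ : characterSpace ℂ A⁺¹, ψ (Unitization.inr a) ≠ 0 →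
      ∃ φ ∈ U, ∀ a : A, ψ (Unitization.inr a) = φ a := by
  have hO := suslin_aux_open U hU
  set O := {ψ : characterSpace ℂ A⁺¹ | ∃ φ ∈ U, ∀ a : A, ψ (Unitization.inr a) = φ a} with hOdef
  obtain ⟨φ, hφ⟩ := hne
  let φ' : characterSpace ℂ A⁺¹ := CharacterSpace.equivAlgHom.symm
    (Unitization.lift (CharacterSpace.toNonUnitalAlgHom φ))
  have hφ' : ∀ a : A, φ' (Unitization.inr a) = φ a := fun a => by simp [φ']
  have hmem : φ' ∈ O := ⟨φ, hφ, hφ'⟩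
  let χ : characterSpace ℂ A⁺¹ := CharacterSpace.equivAlgHom.symm (Unitization.fstHom ℂ A)
  have hχ : ∀ b, χ b = b.fst := fun b => by simp [χ]
  have hχO : χ ∉ O := by
    rintro ⟨η, -, h⟩
    apply η.2.1
    refine DFunLike.ext _ _ fun a => ?_
    change η a = 0
    rw [← h, hχ]; simp
  obtain ⟨f, hf0, hf1, -⟩ := exists_continuous_zero_one_of_isClosed hO.isClosed_compl
    (isClosed_singleton (x := φ')) (by simpa using hmem)
  obtain ⟨g, hg⟩ := (gelfandTransform_bijective A⁺¹).2
    ⟨fun x => (f x : ℂ), Complex.continuous_ofReal.comp (map_continuous f)⟩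
  have hgf : ∀ ψ : characterSpace ℂ A⁺¹, ψ g = (f ψ : ℂ) := fun ψ => DFunLike.congr_fun hg ψ
  have hfst : g.fst = 0 := by
    rw [← hχ, hgf, hf0 hχO]; simp
  have hga : g = Unitization.inr g.snd := by
    ext <;> simp [hfst]
  refine ⟨g.snd, ?_, ?_⟩
  · intro h
    have h1 := hgf φ'
    rw [hga, h, hf1 rfl] at h1
    simp at h1
  · intro ψ hψ
    rw [← hga, hgf] at hψ
    by_contra hn
    apply hψ
    rw [hf0 (show ψ ∈ Oᶜ from hn)]; simp

open WeakDual in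
open scoped CStarAlgebra in
theorem suslin_aux_alg {A : Type*} [NonUnitalCommCStarAlgebra A]
    (T : Set (Set (characterSpace ℂ A)))
    (hT : ∀ U ∈ T, IsOpen U ∧ U.Nonempty) (hdisj : T.PairwiseDisjoint id) :
    ∃ a : T → A, (∀ U, a U ≠ 0) ∧ ∀ U V, U ≠ V → star (a U) * a V = 0 := by
  choose a ha0 ha using fun U : T => suslin_aux_fun U.1 (hT U.1 U.2).1 (hT U.1 U.2).2
  refine ⟨a, ha0, fun U V hUV => ?_⟩
  apply Unitization.inr_injective (R := ℂ)
  apply (gelfandTransform_bijective A⁺¹).1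
  ext ψ
  change ψ _ = ψ _
  rw [Unitization.inr_mul, Unitization.inr_star, map_mul, map_star, Unitization.inr_zero, map_zero]
  by_contra hne
  obtain ⟨h1, h2⟩ := mul_ne_zero_iff.1 hne
  obtain ⟨φ, hφ, e1⟩ := ha U ψ (by simpa using h1)
  obtain ⟨η, hη, e2⟩ := ha V ψ h2
  have : φ = η := CharacterSpace.ext fun x => by rw [← e1, e2]
  subst this
  exact Set.disjoint_left.1 (hdisj U.2 V.2 (fun h => hUV (Subtype.ext h))) hφ hη

theorem suslin_aux_orth {H ι : Type*} [NormedAddCommGroup H] [InnerProductSpace ℂ H]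
    [TopologicalSpace.SeparableSpace H] (e : ι → H) (h0 : ∀ i, e i ≠ 0)
    (h : ∀ i j, i ≠ j → inner ℂ (e i) (e j) = 0) : Countable ι := by
  refine Pairwise.countable_of_isOpen_disjoint (s := fun i => Metric.ball (e i) (‖e i‖ / 2))
    ?_ (fun i => Metric.isOpen_ball)
    (fun i => Metric.nonempty_ball.2 (half_pos (norm_pos_iff.2 (h0 i))))
  intro i j hij
  refine Set.disjoint_left.2 fun z hz hz' => ?_
  rw [Metric.mem_ball, dist_eq_norm] at hz hz'
  have h1 := norm_sub_sq (𝕜 := ℂ) (e i) (e j)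
  rw [h i j hij] at h1
  have h2 : ‖e i - e j‖ ≤ ‖z - e i‖ + ‖z - e j‖ := by
    have h3 := norm_sub_le (z - e j) (z - e i)
    rw [sub_sub_sub_cancel_left] at h3
    linarith
  simp at h1
  have := norm_nonneg (e i - e j)
  nlinarith [sq_nonneg (‖e i‖ - ‖e j‖)]


/-- The spectrum (character space) of a commutative C*-subalgebra of the bounded operators
on a separable Hilbert space satisfies the Suslin condition: every pairwise disjoint family
of nonempty open subsets is countable. -/
theorem stmt3 {H : Type*} [NormedAddCommGroup H] [InnerProductSpace ℂ H] [CompleteSpace H]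
    [TopologicalSpace.SeparableSpace H]
    (S : NonUnitalStarSubalgebra ℂ (H →L[ℂ] H))
    (hclosed : IsClosed (S : Set (H →L[ℂ] H)))
    (hcomm : ∀ a b : S, a * b = b * a)
    (T : Set (Set (WeakDual.characterSpace ℂ S)))
    (hT : ∀ U ∈ T, IsOpen U ∧ U.Nonempty) (hdisj : T.PairwiseDisjoint id) :
    T.Countable := by
  haveI : IsClosed (S : Set (H →L[ℂ] H)) := hclosed
  letI i1 : NonUnitalCStarAlgebra S := NonUnitalStarSubalgebra.nonUnitalCStarAlgebra S
  letI i2 : NonUnitalCommCStarAlgebra S := { i1 with mul_comm := hcomm }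
  obtain ⟨a, ha0, ha⟩ := suslin_aux_alg (A := S) T hT hdisj
  have hx : ∀ U : T, ∃ x : H, (a U : H →L[ℂ] H) x ≠ 0 := by
    intro U
    by_contra! h
    exact ha0 U (Subtype.ext (ContinuousLinearMap.ext h))
  choose x hx using hx
  refine suslin_aux_orth (fun U : T => (a U : H →L[ℂ] H) (x U)) hx fun U V hUV => ?_
  have h1 : star (a U : H →L[ℂ] H) * (a V : H →L[ℂ] H) = 0 := congrArg Subtype.val (ha U V hUV)
  have h2 := DFunLike.congr_fun h1 (x V)
  rw [← ContinuousLinearMap.adjoint_inner_right]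
  change inner ℂ (x U) ((star (a U : H →L[ℂ] H) * (a V : H →L[ℂ] H)) (x V)) = 0
  rw [h1]; simp
end

section
/- Let H be a separable complex Hilbert space and let A be a commutative C*-subalgebra of B(H), i.e. a commutative, norm-closed, star-closed subalgebra of the algebra of bounded linear operators on H. Then the following conditions are equivalent: (a) the spectrum of A is paracompact; (b) the spectrum of A is σ-compact; (c) the spectrum of A is a Lindelöf space (every open cover has a countable subcover); (d) A has a sequential approximate identity bounded by one, i.e. a sequence (e_n) in A with ‖e_n‖ ≤ 1 for all n and ‖a·e_n − a‖ → 0 for every a ∈ A. -/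
open Filter
open WeakDual Topology

section Abs
variable {A : Type*} [NonUnitalCommCStarAlgebra A]

noncomputable def emb (φ : characterSpace ℂ A) : characterSpace ℂ (Unitization ℂ A) :=
  CharacterSpace.equivAlgHom.symm (Unitization.lift (CharacterSpace.toNonUnitalAlgHom φ))

lemma emb_apply (φ : characterSpace ℂ A) (x : Unitization ℂ A) :
    emb φ x = x.fst + φ x.snd := by
  change (Unitization.lift (CharacterSpace.toNonUnitalAlgHom φ)) x = _
  simp [Unitization.lift]

lemma emb_inr (φ : characterSpace ℂ A) (a : A) : emb φ (a : Unitization ℂ A) = φ a := by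
  simp [emb_apply]

lemma eval_cont {B : Type*} [NonUnitalCommCStarAlgebra B] (a : B) :
    Continuous (fun φ : characterSpace ℂ B => φ a) :=
  (WeakDual.eval_continuous a).comp continuous_subtype_val

lemma emb_embedding : IsEmbedding (emb (A := A)) := by
  refine ⟨⟨?_⟩, fun φ ψ h => ?_⟩
  · apply le_antisymm
    · rw [← continuous_iff_le_induced]
      refine Continuous.subtype_mk (WeakBilin.continuous_of_continuous_eval _ fun x => ?_) _
      change Continuous fun φ : characterSpace ℂ A => emb φ x
      simp only [emb_apply]
      exact continuous_const.add (eval_cont _)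
    · refine continuous_id_iff_le.1 ?_
      refine continuous_induced_rng.2 (continuous_induced_rng.2 ?_)
      refine @continuous_pi _ _ _ (_) _ _ fun a => ?_
      have h : Continuous[TopologicalSpace.induced (emb (A := A)) inferInstance, inferInstance]
          ((fun y : characterSpace ℂ (Unitization ℂ A) => y (a : Unitization ℂ A)) ∘ emb) :=
        @Continuous.comp _ _ _ (_) _ _ _ _ (eval_cont _) continuous_induced_dom
      have h2 : ((fun y : characterSpace ℂ (Unitization ℂ A) => y (a : Unitization ℂ A)) ∘ emb)
        = fun φ => φ a := funext fun φ => emb_inr φ a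
      rw [h2] at h
      exact h
  · apply CharacterSpace.ext
    intro a
    rw [← emb_inr, h, emb_inr]

lemma emb_range (y : characterSpace ℂ (Unitization ℂ A)) (a : A)
    (h : y (a : Unitization ℂ A) ≠ 0) : ∃ φ, emb φ = y := by
  let f : A →L[ℂ] ℂ := (CharacterSpace.toCLM y).comp
    ⟨(Unitization.inrNonUnitalAlgHom ℂ A : A →ₗ[ℂ] _), Unitization.isometry_inr.continuous⟩
  have hf : ∀ b, f b = y (b : Unitization ℂ A) := fun b => rfl
  refine ⟨⟨(f : A →L[ℂ] ℂ), ?_, ?_⟩, ?_⟩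
  · intro h0
    exact h (congrArg (fun g : A →L[ℂ] ℂ => g a) h0)
  · intro b c
    change f (b * c) = f b * f c
    rw [hf, hf, hf, Unitization.inr_mul, map_mul]
  · apply CharacterSpace.ext
    intro x
    rw [emb_apply]
    change x.fst + f x.snd = _
    rw [hf]
    conv_rhs => rw [← Unitization.inl_fst_add_inr_snd_eq x, map_add]
    congr 1
    change _ = y (algebraMap ℂ (Unitization ℂ A) x.fst)
    rw [AlgHomClass.commutes]; rfl

lemma compact_ge (a : A) {r : ℝ} (hr : 0 < r) :
    IsCompact {φ : characterSpace ℂ A | r ≤ ‖φ a‖} := by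
  rw [emb_embedding.isCompact_iff]
  have : emb '' {φ : characterSpace ℂ A | r ≤ ‖φ a‖} =
      {y : characterSpace ℂ (Unitization ℂ A) | r ≤ ‖y (a : Unitization ℂ A)‖} := by
    ext y
    constructor
    · rintro ⟨φ, hφ, rfl⟩
      simpa [emb_inr] using hφ
    · intro hy
      obtain ⟨φ, rfl⟩ := emb_range y a (norm_pos_iff.1 (hr.trans_le hy))
      exact ⟨φ, by simpa [emb_inr] using hy, rfl⟩
  rw [this]
  exact (isClosed_le continuous_const (eval_cont _).norm).isCompact

lemma norm_le_of (a : A) {r : ℝ} (hr : 0 ≤ r) (h : ∀ φ : characterSpace ℂ A, ‖φ a‖ ≤ r) :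
    ‖a‖ ≤ r := by
  rw [← Unitization.norm_inr (𝕜 := ℂ),
    ← (gelfandTransform_isometry (Unitization ℂ A)).norm_map_of_map_zero (map_zero _),
    ContinuousMap.norm_le _ hr]
  intro y
  change ‖y (a : Unitization ℂ A)‖ ≤ r
  by_cases hy : y (a : Unitization ℂ A) = 0
  · simpa [hy]
  · obtain ⟨φ, rfl⟩ := emb_range y a hy
    rw [emb_inr]; exact h φ

lemma norm_apply_le (φ : characterSpace ℂ A) (a : A) : ‖φ a‖ ≤ ‖a‖ := by
  have h := (gelfandTransform ℂ (Unitization ℂ A) (a : Unitization ℂ A)).norm_coe_le_norm (emb φ)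
  have h2 := (gelfandTransform_isometry (Unitization ℂ A)).norm_map_of_map_zero (map_zero _)
    (a : Unitization ℂ A)
  rw [h2, Unitization.norm_inr] at h
  rw [← emb_inr]
  exact h

lemma char_star (φ : characterSpace ℂ A) (a : A) : φ (star a) = star (φ a) := by
  rw [← emb_inr φ (star a), ← emb_inr φ a, Unitization.inr_star, map_star]

lemma char_ne_zero (φ : characterSpace ℂ A) : ∃ a, φ a ≠ 0 := by
  by_contra! h
  exact φ.2.1 (ContinuousLinearMap.ext h)

lemma char_t2 : T2Space (characterSpace ℂ A) := emb_embedding.t2Space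

lemma char_wlc : WeaklyLocallyCompactSpace (characterSpace ℂ A) where
  exists_compact_mem_nhds φ := by
    obtain ⟨a, ha⟩ := char_ne_zero φ
    have h := norm_pos_iff.2 ha
    refine ⟨_, compact_ge a (half_pos h), ?_⟩
    filter_upwards [(eval_cont a).norm.continuousAt.eventually (lt_mem_nhds (half_lt_self h))]
      with ψ hψ using hψ.le

lemma emb_isOpen : IsOpen (Set.range (emb (A := A))) := by
  have : Set.range (emb (A := A)) = ⋃ a : A,
      {y : characterSpace ℂ (Unitization ℂ A) | y (a : Unitization ℂ A) ≠ 0} := by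
    ext y
    simp only [Set.mem_range, Set.mem_iUnion]
    constructor
    · rintro ⟨φ, rfl⟩
      obtain ⟨a, ha⟩ := char_ne_zero φ
      exact ⟨a, by simpa [emb_inr] using ha⟩
    · rintro ⟨a, ha⟩
      exact emb_range y a ha
  rw [this]
  exact isOpen_iUnion fun a => isOpen_ne_fun (eval_cont _) continuous_const

lemma ury (K U : Set (characterSpace ℂ A)) (hK : IsCompact K) (hU : IsOpen U) (h : K ⊆ U) :
    ∃ a : A, ‖a‖ ≤ 1 ∧ (∀ φ ∈ K, φ a = 1) ∧ ∀ φ ∉ U, φ a = 0 := by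
  have hoe : IsOpenEmbedding (emb (A := A)) := ⟨emb_embedding, emb_isOpen⟩
  have hd : Disjoint (emb '' U)ᶜ (emb '' K) := by
    rw [Set.disjoint_left]
    rintro y hy ⟨φ, hφ, rfl⟩
    exact hy ⟨φ, h hφ, rfl⟩
  obtain ⟨f, f0, f1, f01⟩ := exists_continuous_zero_one_of_isClosed
    (hoe.isOpenMap U hU).isClosed_compl (hK.image emb_embedding.continuous).isClosed hd
  let g : C(characterSpace ℂ (Unitization ℂ A), ℂ) := ⟨fun y => (f y : ℂ), by fun_prop⟩
  obtain ⟨x, hx⟩ := (gelfandTransform_bijective (Unitization ℂ A)).2 g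
  have hx' : ∀ y : characterSpace ℂ (Unitization ℂ A), y x = f y := fun y =>
    congrArg (fun g => g y) hx
  let inf : characterSpace ℂ (Unitization ℂ A) :=
    CharacterSpace.equivAlgHom.symm (Unitization.fstHom ℂ A)
  have hinf : inf ∉ Set.range (emb (A := A)) := by
    rintro ⟨φ, hφ⟩
    obtain ⟨a, ha⟩ := char_ne_zero φ
    rw [← emb_inr, hφ] at ha
    exact ha rfl
  have hfst : x.fst = 0 := by
    change inf x = 0
    rw [hx', f0 fun ⟨φ, _, h⟩ => hinf ⟨φ, h⟩]; simp
  have hs : ∀ φ : characterSpace ℂ A, φ x.snd = f (emb φ) := fun φ => by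
    rw [← hx', emb_apply, hfst, zero_add]
  refine ⟨x.snd, norm_le_of _ zero_le_one fun φ => ?_, fun φ hφ => ?_, fun φ hφ => ?_⟩
  · rw [hs, Complex.norm_real, Real.norm_eq_abs, abs_of_nonneg (f01 _).1]
    exact (f01 _).2
  · rw [hs, f1 ⟨φ, hφ, rfl⟩]; simp
  · rw [hs, f0]
    · simp
    · rintro ⟨ψ, hψ, he⟩
      exact hφ (emb_embedding.injective he ▸ hψ)

lemma abs_bd [SigmaCompactSpace (characterSpace ℂ A)] :
    ∃ e : ℕ → A, (∀ n, ‖e n‖ ≤ 1) ∧ ∀ a, Tendsto (fun n => ‖a * e n - a‖) atTop (𝓝 0) := by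
  have := char_wlc (A := A)
  let K : CompactExhaustion (characterSpace ℂ A) := default
  choose e he1 heK _ using fun n => ury (K n) Set.univ (K.isCompact n) isOpen_univ
    (Set.subset_univ _)
  refine ⟨e, he1, fun a => ?_⟩
  rw [Metric.tendsto_atTop]
  intro ε hε
  obtain ⟨N, hN⟩ := K.exists_superset_of_isCompact (compact_ge a (r := ε / 4) (by positivity))
  refine ⟨N, fun n hn => ?_⟩
  rw [dist_zero_right, norm_norm]
  refine (norm_le_of _ (r := ε / 2) (by positivity) fun φ => ?_).trans_lt (half_lt_self hε)
  rw [map_sub, map_mul]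
  by_cases hφ : ε / 4 ≤ ‖φ a‖
  · rw [heK n φ (K.subset hn (hN hφ))]; simp; positivity
  · have h1 : ‖φ (e n)‖ ≤ 1 := by
      exact (norm_apply_le φ (e n)).trans (he1 n)
    calc _ ≤ ‖φ a * φ (e n)‖ + ‖φ a‖ := norm_sub_le _ _
      _ ≤ ‖φ a‖ * 1 + ‖φ a‖ := by rw [norm_mul]; gcongr
      _ ≤ _ := by linarith

lemma abs_db (e : ℕ → A) (h : ∀ a, Tendsto (fun n => ‖a * e n - a‖) atTop (𝓝 0)) :
    SigmaCompactSpace (characterSpace ℂ A) := by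
  refine ⟨⟨fun n => {φ | 1 / 2 ≤ ‖φ (e n)‖}, fun n => compact_ge _ (by norm_num), ?_⟩⟩
  rw [Set.eq_univ_iff_forall]
  intro φ
  rw [Set.mem_iUnion]
  obtain ⟨a, ha⟩ := char_ne_zero φ
  have h1 : Tendsto (fun n => φ (a * e n - a)) atTop (𝓝 0) := by
    have := ((map_continuous φ).tendsto 0).comp (tendsto_zero_iff_norm_tendsto_zero.2 (h a))
    simpa [Function.comp_def] using this
  have h2 : Tendsto (fun n => φ (e n)) atTop (𝓝 1) := by
    have := (h1.const_mul (φ a)⁻¹).add_const 1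
    simp only [map_sub, map_mul, mul_zero, zero_add] at this
    refine this.congr fun n => ?_
    field_simp
    ring
  have h3 := h2.norm
  rw [norm_one] at h3
  obtain ⟨n, hn⟩ := (h3.eventually (lt_mem_nhds (show (1 / 2 : ℝ) < 1 by norm_num))).exists
  exact ⟨n, hn.le⟩

lemma abs_disj (U V : Set (characterSpace ℂ A)) (h : Disjoint U V) (a b : A)
    (ha : ∀ φ ∉ U, φ a = 0) (hb : ∀ φ ∉ V, φ b = 0) : star a * b = 0 := by
  rw [← norm_le_zero_iff]
  refine norm_le_of _ le_rfl fun φ => ?_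
  rw [map_mul, char_star]
  by_cases hU : φ ∈ U
  · simp [hb φ (Set.disjoint_left.1 h hU)]
  · simp [ha φ hU]
end Abs

lemma lind_sigma {X : Type*} [TopologicalSpace X] [WeaklyLocallyCompactSpace X] [LindelofSpace X] :
    SigmaCompactSpace X := by
  choose K hK hx using fun x : X => exists_compact_mem_nhds x
  obtain ⟨s, hs, hc⟩ := countable_cover_nhds hx
  exact SigmaCompactSpace.of_countable (K '' s) (hs.image _) (by rintro _ ⟨x, _, rfl⟩; exact hK x)
    (by rw [Set.sUnion_image]; exact hc)

lemma para_sigma {X : Type*} [TopologicalSpace X] [WeaklyLocallyCompactSpace X]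
    [ParacompactSpace X]
    (ccc : ∀ C : Set (Set X), (∀ U ∈ C, IsOpen U ∧ U.Nonempty) → C.PairwiseDisjoint id →
      C.Countable) : SigmaCompactSpace X := by
  choose K hK hx using fun x : X => exists_compact_mem_nhds x
  obtain ⟨V, hVo, hVc, hVf, hVK⟩ := precise_refinement (fun x => interior (K x))
    (fun _ => isOpen_interior) (by
      rw [Set.eq_univ_iff_forall]
      exact fun x => Set.mem_iUnion.2 ⟨x, mem_interior_iff_mem_nhds.2 (hx x)⟩)
  have hcount : {x | (V x).Nonempty}.Countable := by
    let P : Set (Set (Set X)) := {C | (∀ U ∈ C, IsOpen U ∧ U.Nonempty ∧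
      {i | (V i ∩ U).Nonempty}.Finite) ∧ C.PairwiseDisjoint id}
    obtain ⟨M, hM⟩ := zorn_subset P (by
      intro c hc hch
      refine ⟨⋃₀ c, ⟨?_, ?_⟩, fun s hs => Set.subset_sUnion_of_mem hs⟩
      · rintro U ⟨C, hC, hU⟩
        exact (hc hC).1 U hU
      · exact (Set.pairwiseDisjoint_sUnion hch.directedOn).2 fun C hC => (hc hC).2)
    have hMc : M.Countable := ccc M (fun U hU => ⟨(hM.1.1 U hU).1, (hM.1.1 U hU).2.1⟩) hM.1.2
    refine (hMc.biUnion (t := fun U _ => {i | (V i ∩ U).Nonempty}) fun U hU =>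
      (hM.1.1 U hU).2.2.countable).mono ?_
    rintro i ⟨x, hxi⟩
    simp only [Set.mem_iUnion]
    by_contra! hcon
    obtain ⟨t, ht, hft⟩ := hVf x
    let W := V i ∩ interior t
    have hW : x ∈ W := ⟨hxi, mem_interior_iff_mem_nhds.2 ht⟩
    have hWP : insert W M ∈ P := by
      refine ⟨?_, ?_⟩
      · rintro U (rfl | hU)
        · refine ⟨(hVo i).inter isOpen_interior, ⟨x, hW⟩, hft.subset ?_⟩
          rintro j ⟨z, hz, hz'⟩
          exact ⟨z, hz, interior_subset hz'.2⟩
        · exact hM.1.1 U hU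
      · refine hM.1.2.insert fun U hU _ => ?_
        rw [id, id, Set.disjoint_left]
        intro z hz hzU
        exact hcon U hU ⟨z, hz.1, hzU⟩
    have hWM : W ∈ M := hM.2 hWP (Set.subset_insert _ _) (Set.mem_insert _ _)
    exact hcon W hWM ⟨x, hxi, hW⟩
  refine SigmaCompactSpace.of_countable (K '' {x | (V x).Nonempty}) (hcount.image _)
    (by rintro _ ⟨x, _, rfl⟩; exact hK x) ?_
  rw [Set.eq_univ_iff_forall]
  intro x
  obtain ⟨i, hi⟩ := Set.mem_iUnion.1 (hVc ▸ Set.mem_univ x : x ∈ ⋃ i, V i)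
  exact ⟨K i, ⟨i, ⟨x, hi⟩, rfl⟩, interior_subset (hVK i hi)⟩

lemma orth_countable {H : Type*} [NormedAddCommGroup H] [InnerProductSpace ℂ H] [CompleteSpace H]
    [TopologicalSpace.SeparableSpace H] {ι : Type*} (T : ι → H →L[ℂ] H) (h0 : ∀ i, T i ≠ 0)
    (h : ∀ i j, i ≠ j → star (T i) * T j = 0) : Countable ι := by
  have hv : ∀ i, ∃ v, ‖T i v‖ = 1 := fun i => by
    obtain ⟨v, hv⟩ : ∃ v, T i v ≠ 0 := by
      by_contra! h
      exact h0 i (ContinuousLinearMap.ext h)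
    refine ⟨((‖T i v‖⁻¹ : ℝ) : ℂ) • v, ?_⟩
    rw [map_smul, norm_smul, Complex.norm_real, norm_inv, norm_norm,
      inv_mul_cancel₀ (norm_ne_zero_iff.2 hv)]
  choose v hv using hv
  have ho : ∀ i j, i ≠ j → inner ℂ (T i (v i)) (T j (v j)) = 0 := fun i j hij => by
    rw [← ContinuousLinearMap.adjoint_inner_right]
    have := congrArg (fun S : H →L[ℂ] H => S (v j)) (h i j hij)
    rw [ContinuousLinearMap.star_eq_adjoint] at this
    change ContinuousLinearMap.adjoint (T i) (T j (v j)) = 0 at this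
    rw [this, inner_zero_right]
  refine Pairwise.countable_of_isOpen_disjoint (α := H)
    (s := fun i => Metric.ball (T i (v i)) (1 / 2)) ?_ (fun i => Metric.isOpen_ball)
    (fun i => ⟨_, Metric.mem_ball_self (by norm_num)⟩)
  intro i j hij
  refine Metric.ball_disjoint_ball ?_
  rw [dist_eq_norm]
  have := @norm_sub_sq ℂ H _ _ _ (T i (v i)) (T j (v j))
  rw [ho i j hij, hv, hv] at this
  simp at this
  nlinarith [norm_nonneg (T i (v i) - T j (v j))]

theorem stmt4 {H : Type*} [NormedAddCommGroup H] [InnerProductSpace ℂ H] [CompleteSpace H]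
    [TopologicalSpace.SeparableSpace H]
    (S : NonUnitalStarSubalgebra ℂ (H →L[ℂ] H))
    (hclosed : IsClosed (S : Set (H →L[ℂ] H)))
    (hcomm : ∀ a b : S, a * b = b * a) :
    List.TFAE [ParacompactSpace (WeakDual.characterSpace ℂ S),
      SigmaCompactSpace (WeakDual.characterSpace ℂ S),
      LindelofSpace (WeakDual.characterSpace ℂ S),
      ∃ e : ℕ → S, (∀ n, ‖(e n : H →L[ℂ] H)‖ ≤ 1) ∧
        ∀ a : S, Tendsto (fun n => ‖((a * e n - a : S) : H →L[ℂ] H)‖) atTop (nhds 0)] := by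
  let i0 : NonUnitalCStarAlgebra S :=
    NonUnitalStarSubalgebra.nonUnitalCStarAlgebra S (h_closed := hclosed)
  let i1 : NonUnitalCommCStarAlgebra S := { i0 with mul_comm := hcomm }
  have iT : T2Space (characterSpace ℂ S) := char_t2 (A := S)
  have iL : WeaklyLocallyCompactSpace (characterSpace ℂ S) :=
    char_wlc (A := S)
  tfae_have 1 → 2 := by
    intro _
    refine para_sigma fun C hC hd => ?_
    have : ∀ U : C, ∃ a : S, a ≠ 0 ∧ ∀ φ : characterSpace ℂ S, φ ∉ U.1 → φ a = 0 := by
      intro U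
      obtain ⟨hU, φ, hφ⟩ := hC U.1 U.2
      obtain ⟨a, -, h1, h2⟩ := ury (A := S) {φ} U.1 isCompact_singleton hU
        (Set.singleton_subset_iff.2 hφ)
      refine ⟨a, ?_, h2⟩
      rintro rfl
      have := h1 φ rfl
      rw [map_zero] at this
      exact zero_ne_one this
    choose a ha0 ha using this
    refine orth_countable (ι := C) (fun U => (a U : H →L[ℂ] H)) (fun U h => ha0 U (Subtype.ext h))
      fun U V hUV => ?_
    exact congrArg Subtype.val (abs_disj (A := S) U.1 V.1
      (hd U.2 V.2 (fun h => hUV (Subtype.ext h))) (a U) (a V) (ha U) (ha V))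
  tfae_have 2 → 3 := fun _ => inferInstance
  tfae_have 3 → 2 := fun _ => lind_sigma
  tfae_have 2 → 1 := fun _ => inferInstance
  tfae_have 2 → 4 := fun h => abs_bd (A := S)
  tfae_have 4 → 2 := fun ⟨e, _, h⟩ => abs_db (A := S) e h
  tfae_finish
end

section
/- Let Ω be a separable locally compact Hausdorff space. Then there exist a separable complex Hilbert space H and an isometric star-algebra homomorphism from C₀(Ω, ℂ) into B(H), the C*-algebra of bounded linear operators on H. -/
open ZeroAtInfty

abbrev HSp : Type := lp (fun _ : ℕ => ℂ) 2

lemma C0_norm_apply_le {Ω : Type*} [TopologicalSpace Ω] (f : C₀(Ω, ℂ)) (x : Ω) : ‖f x‖ ≤ ‖f‖ := by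
  rw [← ZeroAtInftyContinuousMap.norm_toBCF_eq_norm]
  exact f.toBCF.norm_coe_le_norm x

lemma C0_bound {Ω : Type*} [TopologicalSpace Ω] (f : C₀(Ω, ℂ)) (s : ℕ → Ω) (x : HSp) (i : ℕ) :
    ‖f (s i) * x i‖ ≤ ‖(((‖f‖ : ℂ) • x : HSp) : ℕ → ℂ) i‖ := by
  rw [lp.coeFn_smul, Pi.smul_apply, smul_eq_mul, norm_mul, norm_mul]
  gcongr
  simpa using C0_norm_apply_le f (s i)

noncomputable def diagFun {Ω : Type*} [TopologicalSpace Ω] (f : C₀(Ω, ℂ)) (s : ℕ → Ω) (x : HSp) :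
    HSp :=
  ⟨fun i => f (s i) * x i, (lp.memℓp ((‖f‖ : ℂ) • x : HSp)).mono' (C0_bound f s x)⟩

lemma diagFun_apply {Ω : Type*} [TopologicalSpace Ω] (f : C₀(Ω, ℂ)) (s : ℕ → Ω) (x : HSp) (i : ℕ) :
    diagFun f s x i = f (s i) * x i := rfl

noncomputable def diagOp {Ω : Type*} [TopologicalSpace Ω] (f : C₀(Ω, ℂ)) (s : ℕ → Ω) :
    HSp →L[ℂ] HSp :=
  LinearMap.mkContinuous
    { toFun := diagFun f s
      map_add' := fun x y => by
        ext i
        simp only [lp.coeFn_add, Pi.add_apply, diagFun_apply]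
        ring
      map_smul' := fun c x => by
        ext i
        simp only [lp.coeFn_smul, Pi.smul_apply, diagFun_apply, smul_eq_mul, RingHom.id_apply]
        ring } ‖f‖ (fun x => by
      have h : ‖diagFun f s x‖ ≤ ‖((‖f‖ : ℂ) • x : HSp)‖ :=
        lp.norm_mono (by norm_num) (C0_bound f s x)
      rw [norm_smul] at h
      simpa using h)

lemma diagOp_apply {Ω : Type*} [TopologicalSpace Ω] (f : C₀(Ω, ℂ)) (s : ℕ → Ω) (x : HSp) (i : ℕ) :
    diagOp f s x i = f (s i) * x i := rfl

lemma diagOp_norm_le {Ω : Type*} [TopologicalSpace Ω] (f : C₀(Ω, ℂ)) (s : ℕ → Ω) :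
    ‖diagOp f s‖ ≤ ‖f‖ := LinearMap.mkContinuous_norm_le _ (norm_nonneg _) _

lemma diagOp_le_norm {Ω : Type*} [TopologicalSpace Ω] (f : C₀(Ω, ℂ)) (s : ℕ → Ω)
    (hs : DenseRange s) : ‖f‖ ≤ ‖diagOp f s‖ := by
  have h1 : ∀ i, ‖f (s i)‖ ≤ ‖diagOp f s‖ := by
    intro i
    have h := (diagOp f s).le_opNorm (lp.single 2 i (1 : ℂ))
    rw [lp.norm_single (by norm_num)] at h
    have h2 := lp.norm_apply_le_norm (by norm_num) (diagOp f s (lp.single 2 i (1 : ℂ))) i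
    rw [diagOp_apply] at h2
    simp at h h2
    exact h2.trans h
  rw [← ZeroAtInftyContinuousMap.norm_toBCF_eq_norm, BoundedContinuousFunction.norm_le (norm_nonneg _)]
  intro x
  have hc : IsClosed {x | ‖f x‖ ≤ ‖diagOp f s‖} :=
    isClosed_le (map_continuous f).norm continuous_const
  exact hs.induction_on x hc h1

noncomputable def diagHom {Ω : Type*} [TopologicalSpace Ω] (s : ℕ → Ω) :
    C₀(Ω, ℂ) →⋆ₙₐ[ℂ] (HSp →L[ℂ] HSp) where
  toFun f := diagOp f s
  map_smul' c f := by
    ext x i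
    simp [diagOp_apply, mul_assoc]
  map_zero' := by
    ext x i
    simp [diagOp_apply]
  map_add' f g := by
    ext x i
    simp [diagOp_apply, add_mul]
  map_mul' f g := by
    ext x i
    simp [diagOp_apply, mul_assoc]
  map_star' f := by
    rw [ContinuousLinearMap.star_eq_adjoint, ContinuousLinearMap.eq_adjoint_iff]
    intro x y
    rw [lp.inner_eq_tsum, lp.inner_eq_tsum]
    congr 1
    ext i
    simp [diagOp_apply]
    ring

lemma HSp_sep : TopologicalSpace.SeparableSpace HSp := by
  let b : HilbertBasis ℕ ℂ HSp := default
  have h : TopologicalSpace.IsSeparable (Set.range b) := (Set.countable_range b).isSeparable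
  have h2 := (h.span (R := ℂ)).closure
  rw [← Submodule.topologicalClosure_coe, b.dense_span] at h2
  exact TopologicalSpace.isSeparable_univ_iff.1 (by simpa using h2)

/-- For a separable locally compact Hausdorff space `Ω`, the C*-algebra `C₀(Ω, ℂ)` embeds
isometrically as a star-subalgebra of `B(H)` for some separable complex Hilbert space `H`. -/
theorem stmt5 {Ω : Type*} [TopologicalSpace Ω] [LocallyCompactSpace Ω] [T2Space Ω]
    [TopologicalSpace.SeparableSpace Ω] :
    ∃ (H : Type) (_ : NormedAddCommGroup H) (_ : InnerProductSpace ℂ H)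
      (_ : CompleteSpace H) (_ : TopologicalSpace.SeparableSpace H)
      (φ : C₀(Ω, ℂ) →⋆ₙₐ[ℂ] (H →L[ℂ] H)), ∀ f : C₀(Ω, ℂ), ‖φ f‖ = ‖f‖ := by
  refine ⟨HSp, inferInstance, inferInstance, inferInstance, HSp_sep, ?_⟩
  rcases isEmpty_or_nonempty Ω with h | h
  · refine ⟨0, fun f => ?_⟩
    have : f = 0 := by
      ext x
      exact h.elim x
    rw [this]
    simp
  · exact ⟨diagHom (TopologicalSpace.denseSeq Ω), fun f => le_antisymm (diagOp_norm_le f _)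
      (diagOp_le_norm f _ (TopologicalSpace.denseRange_denseSeq Ω))⟩
end

section
/- There exists a compact Hausdorff topological space X which is separable, hereditarily paracompact (every topological subspace of X, with the subspace topology, is paracompact), not metrizable, and such that the C*-algebra C(X, ℂ) of continuous complex-valued functions on X with the supremum norm is not a separable Banach space. (Such a space is the 'two arrows of Alexandrov' space: the set [0,1) × {0} ∪ (0,1] × {1} with the topology generated by the sets ([α,β) × {0}) ∪ ((α,β) × {1}) and ((α,β) × {0}) ∪ ((α,β] × {1}).) -/
open Set Topology TopologicalSpace

theorem aux_paracompact (X : Type) [TopologicalSpace X] [RegularSpace X] [LindelofSpace X] :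
    ParacompactSpace X := by
  classical
  refine ⟨fun α s ho hc => ?_⟩
  have h1 : ∀ x : X, ∃ a, ∃ V : Set X, IsOpen V ∧ x ∈ V ∧ closure V ⊆ s a := by
    intro x
    have hx : x ∈ ⋃ a, s a := by rw [hc]; trivial
    obtain ⟨a, ha⟩ := mem_iUnion.1 hx
    obtain ⟨t, ht, htc, hts⟩ := exists_mem_nhds_isClosed_subset ((ho a).mem_nhds ha)
    obtain ⟨V, hVt, hV, hxV⟩ := mem_nhds_iff.1 ht
    exact ⟨a, V, hV, hxV, (closure_minimal hVt htc).trans hts⟩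
  choose a V hV hxV hVs using h1
  obtain ⟨T, hT, hTc⟩ := isLindelof_univ.elim_countable_subcover V hV
    (fun x _ => mem_iUnion.2 ⟨x, hxV x⟩)
  rcases isEmpty_or_nonempty X with hX | hX
  · refine ⟨PEmpty, fun _ => ∅, by simp, ?_, ?_, by simp⟩
    · ext x; exact (hX.false x).elim
    · intro x; exact (hX.false x).elim
  have hTne : T.Nonempty := by
    obtain ⟨x⟩ := hX
    have := hTc (mem_univ x)
    simp only [mem_iUnion] at this
    obtain ⟨i, hi, -⟩ := this
    exact ⟨i, hi⟩
  obtain ⟨e, rfl⟩ := hT.exists_eq_range hTne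
  have hcov : ∀ x, ∃ n, x ∈ V (e n) := by
    intro x
    have := hTc (mem_univ x)
    simpa using this
  refine ⟨ℕ, fun n => s (a (e n)) \ ⋃ k ∈ Finset.range n, closure (V (e k)), ?_, ?_, ?_, ?_⟩
  · intro n
    refine (ho _).sdiff ?_
    exact (Finset.range n).finite_toSet.isClosed_biUnion (fun k _ => isClosed_closure)
  · rw [eq_univ_iff_forall]
    intro x
    have hex : ∃ n, x ∈ s (a (e n)) := by
      obtain ⟨n, hn⟩ := hcov x
      exact ⟨n, hVs _ (subset_closure hn)⟩
    refine mem_iUnion.2 ⟨Nat.find hex, Nat.find_spec hex, ?_⟩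
    simp only [mem_iUnion, Finset.mem_range, not_exists]
    intro k hk hxk
    exact Nat.find_min hex hk (hVs _ hxk)
  · intro x
    obtain ⟨n, hn⟩ := hcov x
    refine ⟨V (e n), (hV _).mem_nhds hn, (Set.finite_Iic n).subset ?_⟩
    rintro m ⟨y, ⟨hy1, hy2⟩, hy3⟩
    by_contra hlt
    simp only [mem_Iic, not_le] at hlt
    apply hy2
    simp only [mem_iUnion, Finset.mem_range]
    exact ⟨n, hlt, subset_closure hy3⟩
  · intro n
    exact ⟨a (e n), sdiff_subset⟩

theorem aux_class (s : LowerSet ℝ) :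
    s = ⊥ ∨ s = ⊤ ∨ (∃ r, s = LowerSet.Iic r) ∨ ∃ r, s = LowerSet.Iio r := by
  by_cases h0 : s = ⊥
  · exact Or.inl h0
  by_cases h1 : s = ⊤
  · exact Or.inr (Or.inl h1)
  have hne : (s : Set ℝ).Nonempty := by
    by_contra h
    rw [not_nonempty_iff_eq_empty] at h
    exact h0 (SetLike.coe_injective (by simpa using h))
  obtain ⟨b, hb⟩ : ∃ b, b ∉ s := by
    by_contra! h
    apply h1
    ext x
    simp [h x]
  have hub : ∀ x ∈ (s : Set ℝ), x ≤ b := fun x hx => by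
    by_contra! hlt
    exact hb (s.lower hlt.le hx)
  have hbd : BddAbove (s : Set ℝ) := ⟨b, hub⟩
  have hlt : ∀ x, x < sSup (s : Set ℝ) → x ∈ s := fun x hx => by
    obtain ⟨y, hy, hxy⟩ := exists_lt_of_lt_csSup hne hx
    exact s.lower hxy.le hy
  right; right
  by_cases hm : sSup (s : Set ℝ) ∈ s
  · left
    refine ⟨sSup (s : Set ℝ), ?_⟩
    ext x
    simp only [SetLike.mem_coe, LowerSet.mem_Iic_iff]
    exact ⟨fun hx => le_csSup hbd hx, fun hx => s.lower hx hm⟩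
  · right
    refine ⟨sSup (s : Set ℝ), ?_⟩
    ext x
    simp only [SetLike.mem_coe, LowerSet.mem_Iio_iff]
    exact ⟨fun hx => lt_of_le_of_ne (le_csSup hbd hx) (fun h => hm (h ▸ hx)), hlt x⟩

section
variable [TopologicalSpace (LowerSet ℝ)] [OrderTopology (LowerSet ℝ)]

theorem aux_Iic {U : Set (LowerSet ℝ)} (hU : IsOpen U) {r : ℝ} (hr : LowerSet.Iic r ∈ U) :
    ∃ q, r < q ∧ ∀ s : LowerSet ℝ, r ∈ s → q ∉ s → s ∈ U := by
  obtain ⟨u, hu, hs⟩ := exists_Ico_subset_of_mem_nhds (hU.mem_nhds hr)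
    ⟨⊤, lt_top_iff_ne_top.2 (fun h => by
      have : r + 1 ∈ LowerSet.Iic r := by rw [h]; trivial
      rw [LowerSet.mem_Iic_iff] at this; linarith)⟩
  obtain ⟨q, hq, hqr⟩ := Set.exists_of_ssubset (LowerSet.coe_ssubset_coe.2 hu)
  refine ⟨q, by simpa using hqr, fun s h1 h2 => hs ⟨?_, ?_⟩⟩
  · intro x hx
    exact s.lower (show x ≤ r by simpa using hx) h1
  · rw [← not_le]
    exact fun h => h2 (h hq)

theorem aux_Iio {U : Set (LowerSet ℝ)} (hU : IsOpen U) {r : ℝ} (hr : LowerSet.Iio r ∈ U) :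
    ∃ q, q < r ∧ ∀ s : LowerSet ℝ, q ∈ s → r ∉ s → s ∈ U := by
  obtain ⟨u, hu, hs⟩ := exists_Ioc_subset_of_mem_nhds (hU.mem_nhds hr)
    ⟨⊥, bot_lt_iff_ne_bot.2 (fun h => by
      have : r - 1 ∈ LowerSet.Iio r := by rw [LowerSet.mem_Iio_iff]; linarith
      rw [h] at this; exact this)⟩
  obtain ⟨q, hq, hqr⟩ := Set.exists_of_ssubset (LowerSet.coe_ssubset_coe.2 hu)
  refine ⟨q, by simpa using hq, fun s h1 h2 => hs ⟨?_, ?_⟩⟩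
  · rw [← not_le]
    exact fun h => hqr (h h1)
  · intro x hx
    simp only [SetLike.mem_coe, LowerSet.mem_Iio_iff]
    by_contra! hlt
    exact h2 (s.lower hlt hx)

theorem aux_sep : SeparableSpace (LowerSet ℝ) := by
  refine ⟨⟨({⊥, ⊤} : Set (LowerSet ℝ)) ∪ range (fun q : ℚ => LowerSet.Iic (q : ℝ)),
    ((Set.toFinite _).countable).union (countable_range _), ?_⟩⟩
  rw [dense_iff_inter_open]
  rintro U hU ⟨s, hs⟩
  rcases aux_class s with rfl | rfl | ⟨r, rfl⟩ | ⟨r, rfl⟩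
  · exact ⟨⊥, hs, by simp⟩
  · exact ⟨⊤, hs, by simp⟩
  · obtain ⟨q, hq, h⟩ := aux_Iic hU hs
    obtain ⟨t, h1, h2⟩ := exists_rat_btwn hq
    exact ⟨LowerSet.Iic (t : ℝ), h _ (by simpa using h1.le) (by simpa using h2), Or.inr ⟨t, rfl⟩⟩
  · obtain ⟨q, hq, h⟩ := aux_Iio hU hs
    obtain ⟨t, h1, h2⟩ := exists_rat_btwn hq
    exact ⟨LowerSet.Iic (t : ℝ), h _ (by simpa using h1.le) (by simpa using h2), Or.inr ⟨t, rfl⟩⟩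

theorem aux_disj {S : Set ℝ} {f g : ℝ → ℝ} (h : ∀ a ∈ S, ∀ b ∈ S, a < b → g a ≤ f b) :
    S.PairwiseDisjoint (fun a => Ioo (f a) (g a)) := by
  intro a ha b hb hab
  rw [Function.onFun, Set.disjoint_left]
  rintro x ⟨h1, h2⟩ ⟨h3, h4⟩
  rcases lt_or_gt_of_ne hab with hlt | hlt
  · linarith [h a ha b hb hlt]
  · linarith [h b hb a ha hlt]

theorem aux_lind (A : Set (LowerSet ℝ)) : IsLindelof A := by
  classical
  refine isLindelof_of_countable_subcover fun {ι} U hU hA => ?_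
  let B : ℚ × ℚ → Set (LowerSet ℝ) := fun p => {s | (p.1 : ℝ) ∈ s ∧ (p.2 : ℝ) ∉ s}
  let P : Set (ℚ × ℚ) := {p | ∃ i, B p ⊆ U i}
  let W : Set (LowerSet ℝ) := ⋃ p ∈ P, B p
  let S1 : Set ℝ := {r | LowerSet.Iic r ∈ A \ W}
  let S2 : Set ℝ := {r | LowerSet.Iio r ∈ A \ W}
  have hS1 : S1.Countable := by
    have : ∀ r : ℝ, ∃ q, r ∈ S1 → r < q ∧ ∃ i, ∀ s : LowerSet ℝ, r ∈ s → q ∉ s → s ∈ U i := by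
      intro r
      by_cases hr : r ∈ S1
      · obtain ⟨i, hi⟩ := mem_iUnion.1 (hA hr.1)
        obtain ⟨q, h1, h2⟩ := aux_Iic (hU i) hi
        exact ⟨q, fun _ => ⟨h1, i, h2⟩⟩
      · exact ⟨0, fun h => (hr h).elim⟩
    choose g hg using this
    refine (aux_disj (f := id) (g := g) ?_).countable_of_isOpen (fun _ _ => isOpen_Ioo)
      (fun r hr => nonempty_Ioo.2 (hg r hr).1)
    intro a ha b hb hab
    by_contra! hlt
    change b < g a at hlt
    obtain ⟨-, i, hi⟩ := hg a ha
    obtain ⟨t, h1, h2⟩ := exists_rat_btwn hab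
    obtain ⟨t', h3, h4⟩ := exists_rat_btwn hlt
    refine hb.2 (mem_iUnion₂.2 ⟨(t, t'), ⟨i, ?_⟩, ?_⟩)
    · rintro s ⟨hs1, hs2⟩
      exact hi s (s.lower h1.le hs1) (fun h => hs2 (s.lower h4.le h))
    · exact ⟨by simpa using h2.le, by simpa using h3⟩
  have hS2 : S2.Countable := by
    have : ∀ r : ℝ, ∃ q, r ∈ S2 → q < r ∧ ∃ i, ∀ s : LowerSet ℝ, q ∈ s → r ∉ s → s ∈ U i := by
      intro r
      by_cases hr : r ∈ S2
      · obtain ⟨i, hi⟩ := mem_iUnion.1 (hA hr.1)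
        obtain ⟨q, h1, h2⟩ := aux_Iio (hU i) hi
        exact ⟨q, fun _ => ⟨h1, i, h2⟩⟩
      · exact ⟨0, fun h => (hr h).elim⟩
    choose g hg using this
    refine (aux_disj (f := g) (g := id) ?_).countable_of_isOpen (fun _ _ => isOpen_Ioo)
      (fun r hr => nonempty_Ioo.2 (hg r hr).1)
    intro a ha b hb hab
    by_contra! hlt
    change g b < a at hlt
    obtain ⟨-, i, hi⟩ := hg b hb
    obtain ⟨t, h1, h2⟩ := exists_rat_btwn hlt
    obtain ⟨t', h3, h4⟩ := exists_rat_btwn hab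
    refine ha.2 (mem_iUnion₂.2 ⟨(t, t'), ⟨i, ?_⟩, ?_⟩)
    · rintro s ⟨hs1, hs2⟩
      exact hi s (s.lower h1.le hs1) (fun h => hs2 (s.lower h4.le h))
    · exact ⟨by simpa using h2, by simpa using h3.le⟩
  let L : Set (LowerSet ℝ) := ({⊥, ⊤} ∪ (LowerSet.Iic '' S1 ∪ LowerSet.Iio '' S2)) ∩ A
  have hL : L.Countable :=
    (((Set.toFinite _).countable).union ((hS1.image _).union (hS2.image _))).mono inter_subset_left
  have hP : P.Countable := Set.to_countable P
  have hLi : ∀ s ∈ L, ∃ i, s ∈ U i := fun s hs => mem_iUnion.1 (hA hs.2)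
  choose c hc using (fun p (hp : p ∈ P) => hp : ∀ p ∈ P, ∃ i, B p ⊆ U i)
  choose d hd using hLi
  have := hL.to_subtype
  have := hP.to_subtype
  have hcL : (range (fun s : L => d s.1 s.2)).Countable := countable_range _
  refine ⟨range (fun p : P => c p.1 p.2) ∪ range (fun s : L => d s.1 s.2), (countable_range _).union hcL, ?_⟩
  intro s hs
  by_cases hW : s ∈ W
  · obtain ⟨p, hp, hsp⟩ := mem_iUnion₂.1 hW
    exact mem_iUnion₂.2 ⟨c p hp, Or.inl ⟨⟨p, hp⟩, rfl⟩, hc p hp hsp⟩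
  · have hsL : s ∈ L := by
      refine ⟨?_, hs⟩
      rcases aux_class s with h | h | ⟨r, h⟩ | ⟨r, h⟩
      · exact Or.inl (Or.inl h)
      · exact Or.inl (Or.inr h)
      · subst h
        exact Or.inr (Or.inl ⟨r, ⟨hs, hW⟩, rfl⟩)
      · subst h
        exact Or.inr (Or.inr ⟨r, ⟨hs, hW⟩, rfl⟩)
    exact mem_iUnion₂.2 ⟨d s hsL, Or.inr ⟨⟨s, hsL⟩, rfl⟩, hd s hsL⟩

theorem aux_clopen (r : ℝ) : IsClopen {s : LowerSet ℝ | r ∈ s} := by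
  have h1 : {s : LowerSet ℝ | r ∈ s} = Set.Ici (LowerSet.Iic r) := by
    ext s
    exact ⟨fun h x hx => s.lower (show x ≤ r by simpa using hx) h,
      fun h => h (show r ∈ LowerSet.Iic r by simp)⟩
  have h2 : {s : LowerSet ℝ | r ∈ s} = Set.Ioi (LowerSet.Iio r) := by
    ext s
    rw [mem_Ioi, ← not_le]
    refine ⟨fun h h' => ?_, fun h => ?_⟩
    · have := h' h
      simp at this
    · by_contra h'
      refine h fun x hx => ?_
      simp only [SetLike.mem_coe, LowerSet.mem_Iio_iff]
      by_contra! hlt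
      exact h' (s.lower hlt hx)
  exact ⟨h1 ▸ isClosed_Ici, h2 ▸ isOpen_Ioi⟩

theorem aux_nonsep : ¬ SeparableSpace C(LowerSet ℝ, ℂ) := by
  classical
  intro hsep
  let f : ℝ → C(LowerSet ℝ, ℂ) := fun r =>
    ⟨fun s => if r ∈ s then 1 else 0,
      continuous_const.if (fun x hx => by rw [(aux_clopen r).frontier_eq] at hx; exact hx.elim)
        continuous_const⟩
  have hd : ∀ a b : ℝ, a < b → 1 ≤ dist (f a) (f b) := by
    intro a b hab
    have := ContinuousMap.dist_apply_le_dist (f := f a) (g := f b) (LowerSet.Iic a)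
    simpa [f, hab.not_ge] using this
  have hp : Pairwise (Function.onFun Disjoint fun r : ℝ => Metric.ball (f r) (1/2)) := by
    intro a b hab
    apply Metric.ball_disjoint_ball
    rcases lt_or_gt_of_ne hab with h | h
    · linarith [hd a b h]
    · rw [dist_comm]; linarith [hd b a h]
  have := hp.countable_of_isOpen_disjoint (fun _ => Metric.isOpen_ball)
    (fun r => ⟨f r, Metric.mem_ball_self (by norm_num)⟩)
  exact Cardinal.not_countable_real (Set.countable_univ_iff.2 this)

end

/-- There exists a compact Hausdorff space which is separable and hereditarily paracompact,
but is not metrizable and whose C*-algebra of continuous complex-valued functions is not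
separable (e.g. the "two arrows" space of Alexandrov). -/
theorem stmt6 :
    ∃ (X : Type) (_ : TopologicalSpace X),
      CompactSpace X ∧ T2Space X ∧ TopologicalSpace.SeparableSpace X ∧
      (∀ s : Set X, ParacompactSpace s) ∧
      ¬ TopologicalSpace.MetrizableSpace X ∧
      ¬ TopologicalSpace.SeparableSpace C(X, ℂ) := by
  let : TopologicalSpace (LowerSet ℝ) := Preorder.topology _
  have : OrderTopology (LowerSet ℝ) := ⟨rfl⟩
  refine ⟨LowerSet ℝ, inferInstance, inferInstance, inferInstance, aux_sep, fun s => ?_, fun h => ?_,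
    aux_nonsep⟩
  · have : LindelofSpace s := isLindelof_iff_lindelofSpace.1 (aux_lind s)
    exact aux_paracompact s
  · let := TopologicalSpace.metrizableSpaceMetric (LowerSet ℝ)
    have : SecondCountableTopology (LowerSet ℝ) := inferInstance
    exact aux_nonsep inferInstance
end

section
/- Let Ω be a locally compact Hausdorff space, let W be an open subset of Ω, and let (V_j)_{j ∈ ℕ} be a countable family of open subsets of Ω with W ⊆ ⋃_{j ∈ ℕ} V_j. If for every j the subspace cl(V_j) ∩ W of Ω (where cl(V_j) denotes the closure of V_j in Ω) is paracompact, then the subspace W is paracompact. -/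
theorem michael_aux.{u} {X : Type u} [TopologicalSpace X] [RegularSpace X]
    (h : ∀ (α : Type u) (s : α → Set X), (∀ a, IsOpen (s a)) → (⋃ a, s a = Set.univ) →
      ∃ t : ℕ → α → Set X, (∀ n a, IsOpen (t n a)) ∧ (∀ n, LocallyFinite (t n)) ∧
        (∀ x, ∃ n a, x ∈ t n a) ∧ ∀ n a, t n a ⊆ s a) : ParacompactSpace X := by
  have step1 : ∀ (α : Type u) (s : α → Set X), (∀ a, IsOpen (s a)) → (⋃ a, s a = Set.univ) →
      ∃ A : ℕ × α → Set X, LocallyFinite A ∧ (∀ x, ∃ p, x ∈ A p) ∧ ∀ p, A p ⊆ s p.2 := by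
    intro α s ho hc
    obtain ⟨t, topn, tl, tc, ts⟩ := h α s ho hc
    refine ⟨fun p => {x | x ∈ t p.1 p.2 ∧ ∀ m < p.1, ∀ b, x ∉ t m b}, ?_, ?_, ?_⟩
    · intro x
      obtain ⟨m, b, hx⟩ := tc x
      choose N hN hf using fun n => tl n x
      refine ⟨t m b ∩ ⋂ k ∈ Set.Iic m, N k, Filter.inter_mem ((topn m b).mem_nhds hx)
        ((Filter.biInter_mem (Set.finite_Iic m)).2 fun k _ => hN k), ?_⟩
      refine ((Set.finite_Iic m).biUnion fun n _ => (hf n).image (Prod.mk n)).subset ?_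
      rintro ⟨n, a⟩ ⟨y, ⟨hy1, hy2⟩, hy3, hy4⟩
      have hn : n ≤ m := by
        by_contra hlt
        exact hy2 m (not_le.1 hlt) b hy3
      simp only [Set.mem_iUnion]
      exact ⟨n, hn, a, ⟨y, hy1, Set.mem_iInter₂.1 hy4 n hn⟩, rfl⟩
    · intro x
      classical
      have hx := tc x
      obtain ⟨a, ha⟩ := Nat.find_spec hx
      exact ⟨(Nat.find hx, a), ha, fun m hm b hb => Nat.find_min hx hm ⟨b, hb⟩⟩
    · exact fun p y hy => ts _ _ hy.1
  have step2 : ∀ (s : X → Set X), (∀ x, IsOpen (s x)) → (∀ x, x ∈ s x) →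
      ∃ A : ℕ × X → Set X, LocallyFinite A ∧ (∀ p, IsClosed (A p)) ∧
        (∀ x, ∃ p, x ∈ A p) ∧ ∀ p, A p ⊆ s p.2 := by
    intro s ho hm
    have : ∀ x, ∃ v : Set X, IsOpen v ∧ x ∈ v ∧ closure v ⊆ s x := by
      intro x
      obtain ⟨c, hc, hcc, hcs⟩ := exists_mem_nhds_isClosed_subset ((ho x).mem_nhds (hm x))
      exact ⟨interior c, isOpen_interior, mem_interior_iff_mem_nhds.2 hc,
        (closure_minimal interior_subset hcc).trans hcs⟩
    choose v vo vm vs using this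
    obtain ⟨A, hl, hc, hs⟩ := step1 X v vo (Set.eq_univ_of_forall fun x =>
      Set.mem_iUnion.2 ⟨x, vm x⟩)
    refine ⟨fun p => closure (A p), hl.closure, fun p => isClosed_closure, fun x => ?_, fun p =>
      (closure_mono (hs p)).trans (vs _)⟩
    obtain ⟨p, hp⟩ := hc x
    exact ⟨p, subset_closure hp⟩
  refine ⟨fun α s ho hc => ?_⟩
  obtain ⟨t, topn, tl, tc, ts⟩ := h α s ho hc
  obtain ⟨A, hl, hc, hs⟩ := step1 α s ho hc
  have : ∀ x, ∃ v : Set X, IsOpen v ∧ x ∈ v ∧ {p | (A p ∩ v).Nonempty}.Finite := by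
    intro x
    obtain ⟨N, hN, hf⟩ := hl x
    refine ⟨interior N, isOpen_interior, mem_interior_iff_mem_nhds.2 hN, hf.subset ?_⟩
    exact fun p hp => hp.mono (Set.inter_subset_inter_right _ interior_subset)
  choose v vo vm vf using this
  obtain ⟨C, Cl, Cc, Ccov, Cs⟩ := step2 v vo vm
  let D : ℕ × α → Set X := fun p => (⋃ k : {k // ¬ (A p ∩ C k).Nonempty}, C k)ᶜ
  have hDo : ∀ p, IsOpen (D p) := fun p => by
    rw [isOpen_compl_iff]
    exact (Cl.comp_injective Subtype.val_injective).isClosed_iUnion fun k => Cc k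
  have hAD : ∀ p, A p ⊆ D p := by
    intro p x hx hx'
    obtain ⟨⟨k, hk⟩, hxk⟩ := Set.mem_iUnion.1 hx'
    exact hk ⟨x, hx, hxk⟩
  have hDl : LocallyFinite D := by
    intro x
    obtain ⟨N, hN, hf⟩ := Cl x
    refine ⟨N, hN, (hf.biUnion fun k _ => vf k.2).subset ?_⟩
    rintro p ⟨y, hyD, hyN⟩
    obtain ⟨k, hk⟩ := Ccov y
    have : (A p ∩ C k).Nonempty := by
      by_contra hne
      exact hyD (Set.mem_iUnion.2 ⟨⟨k, hne⟩, hk⟩)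
    exact Set.mem_biUnion (x := k) ⟨y, hk, hyN⟩
      (this.mono (Set.inter_subset_inter_right _ (Cs k)))
  refine ⟨ℕ × α, fun p => D p ∩ s p.2, fun p => (hDo p).inter (ho _), ?_,
    hDl.subset fun p => Set.inter_subset_left, fun p => ⟨p.2, Set.inter_subset_right⟩⟩
  refine Set.eq_univ_of_forall fun x => ?_
  obtain ⟨p, hp⟩ := hc x
  exact Set.mem_iUnion.2 ⟨p, hAD p hp, hs p hp⟩

/-- Let `W` be an open subset of a locally compact Hausdorff space `Ω`, covered by countably
many open sets `V j`. If each subspace `closure (V j) ∩ W` is paracompact, then so is `W`. -/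
theorem stmt8 {Ω : Type*} [TopologicalSpace Ω] [LocallyCompactSpace Ω] [T2Space Ω]
    (W : Set Ω) (hW : IsOpen W) (V : ℕ → Set Ω) (hV : ∀ j, IsOpen (V j))
    (hcover : W ⊆ ⋃ j, V j)
    (hpara : ∀ j, ParacompactSpace ((closure (V j) ∩ W : Set Ω))) :
    ParacompactSpace W := by
  apply michael_aux
  intro α s ho hc
  have key : ∀ j, ∃ t : α → Set W, (∀ a, IsOpen (t a)) ∧ LocallyFinite t ∧
      (∀ x : W, x.1 ∈ V j → ∃ a, x ∈ t a) ∧ ∀ a, t a ⊆ s a := by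
    intro j
    have := hpara j
    let i : (closure (V j) ∩ W : Set Ω) → W := Set.inclusion Set.inter_subset_right
    have hi : Topology.IsInducing i :=
      (Topology.IsEmbedding.inclusion Set.inter_subset_right).isInducing
    obtain ⟨t, topn, tc, tl, ts⟩ := precise_refinement (fun a => i ⁻¹' s a)
      (fun a => (ho a).preimage hi.continuous) (by
        rw [← Set.preimage_iUnion, hc, Set.preimage_univ])
    refine ⟨fun a => {w | w.1 ∈ V j ∧ w ∈ i '' t a}, fun a => ?_, fun x => ?_, ?_, ?_⟩
    · obtain ⟨O, hO, hOt⟩ := hi.isOpen_iff.1 (topn a)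
      have : {w : W | w.1 ∈ V j ∧ w ∈ i '' t a} = Subtype.val ⁻¹' V j ∩ O := by
        ext w
        rw [← hOt]
        constructor
        · rintro ⟨h1, y, hy, rfl⟩
          exact ⟨h1, hy⟩
        · rintro ⟨h1, h2⟩
          exact ⟨h1, ⟨w.1, subset_closure h1, w.2⟩, h2, rfl⟩
      beta_reduce; rw [this]
      exact ((hV j).preimage continuous_subtype_val).inter hO
    · by_cases hx : x.1 ∈ closure (V j)
      · obtain ⟨N, hN, hf⟩ := tl ⟨x.1, hx, x.2⟩
        rw [hi.nhds_eq_comap] at hN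
        obtain ⟨M, hM, hMN⟩ := hN
        refine ⟨M, hM, hf.subset ?_⟩
        rintro a ⟨_, ⟨-, y, hy, rfl⟩, hyM⟩
        exact ⟨y, hy, hMN hyM⟩
      · refine ⟨Subtype.val ⁻¹' (closure (V j))ᶜ,
          (isClosed_closure.isOpen_compl.preimage continuous_subtype_val).mem_nhds hx, ?_⟩
        refine Set.finite_empty.subset ?_
        rintro a ⟨y, ⟨hy, -⟩, hy'⟩
        exact hy' (subset_closure hy)
    · intro x hx
      have : (⟨x.1, subset_closure hx, x.2⟩ : (closure (V j) ∩ W : Set Ω)) ∈ ⋃ a, t a := by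
        rw [tc]; trivial
      obtain ⟨a, ha⟩ := Set.mem_iUnion.1 this
      exact ⟨a, hx, _, ha, rfl⟩
    · rintro a _ ⟨-, y, hy, rfl⟩
      exact ts a hy
  choose t topn tl tc ts using key
  refine ⟨t, topn, tl, fun x => ?_, ts⟩
  obtain ⟨j, hj⟩ := Set.mem_iUnion.1 (hcover x.2)
  exact ⟨j, tc j x hj⟩
end

section
/- Let Ω be a σ-compact locally compact Hausdorff space and let A be a C*-algebra containing a strictly positive element h, i.e. 0 ≤ h and the closure of the set {h·a : a ∈ A} equals A. Let f ∈ C₀(Ω, ℝ) satisfy f(t) > 0 for every t ∈ Ω. Then the element g ∈ C₀(Ω, A) defined by g(t) = f(t)·h is a strictly positive element of the C*-algebra C₀(Ω, A); that is, 0 ≤ g and the closure of the set {g·b : b ∈ C₀(Ω, A)} equals C₀(Ω, A). -/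
open ZeroAtInfty

/-- If `Ω` is a σ-compact locally compact Hausdorff space, `h` is a strictly positive element
of a C*-algebra `A`, and `f ∈ C₀(Ω, ℝ)` is everywhere strictly positive, then the element
`g ∈ C₀(Ω, A)` given by `g t = f t • h` is a strictly positive element of `C₀(Ω, A)`:
`g` is pointwise nonnegative and `g · C₀(Ω, A)` is dense. -/
theorem stmt9 {Ω : Type*} [TopologicalSpace Ω] [LocallyCompactSpace Ω] [T2Space Ω]
    [SigmaCompactSpace Ω]
    {A : Type*} [NonUnitalCStarAlgebra A] [PartialOrder A] [StarOrderedRing A]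
    (h : A) (hpos : 0 ≤ h) (hstrict : closure (Set.range fun a : A => h * a) = Set.univ)
    (f : C₀(Ω, ℝ)) (hf : ∀ t, 0 < f t)
    (g : C₀(Ω, A)) (hg : ∀ t, g t = f t • h) :
    (∀ t, 0 ≤ g t) ∧ closure (Set.range fun b : C₀(Ω, A) => g * b) = Set.univ := by
  refine ⟨fun t => by rw [hg]; exact smul_nonneg (hf t).le hpos, ?_⟩
  rw [Set.eq_univ_iff_forall]
  intro b
  rw [Metric.mem_closure_iff]
  intro ε hε
  have hb : Continuous fun y => ‖b y‖ := b.continuous.norm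
  have hfc : Continuous fun y => f y := f.continuous
  have hbc : Continuous fun y => b y := b.continuous
  let S : Ω → Set A := fun y => {c | (f y • (h * c)) ∈ Metric.ball (b y) (ε / 2)} ∩
    {c | ‖b y‖ < ε / 4 → c = 0}
  have hS : ∀ y, Convex ℝ (S y) := by
    intro y
    apply Convex.inter
    · exact (convex_ball (b y) (ε / 2)).is_linear_preimage
        (f := fun c => f y • (h * c))
        ⟨fun c d => by simp [mul_add], fun r c => by
          rw [mul_smul_comm, smul_comm]⟩
    · intro c hc d hd p q _ _ _ hy
      simp [hc hy, hd hy]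
  have hloc : ∀ x : Ω, ∃ c : A, ∀ᶠ y in nhds x, c ∈ S y := by
    intro x
    by_cases hx : ‖b x‖ < ε / 2
    · refine ⟨0, ?_⟩
      filter_upwards [hb.continuousAt.eventually_lt continuousAt_const hx] with y hy
      refine ⟨?_, fun _ => rfl⟩
      simpa using hy
    · have hx4 : ε / 4 < ‖b x‖ := by linarith
      have hm : (f x)⁻¹ • b x ∈ closure (Set.range fun a : A => h * a) := by
        rw [hstrict]; trivial
      rw [Metric.mem_closure_iff] at hm
      obtain ⟨_, ⟨c, rfl⟩, hc⟩ := hm (ε / 2 / f x) (div_pos (half_pos hε) (hf x))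
      have hc' : dist (f x • (h * c)) (b x) < ε / 2 := by
        have e : b x = f x • ((f x)⁻¹ • b x) := by
          rw [smul_inv_smul₀ (hf x).ne']
        rw [e, dist_smul₀, dist_comm, Real.norm_of_nonneg (hf x).le]
        rw [lt_div_iff₀ (hf x)] at hc
        linarith
      refine ⟨c, ?_⟩
      have hcont : Continuous fun y => dist (f y • (h * c)) (b y) :=
        (hfc.smul continuous_const).dist hbc
      filter_upwards [hcont.continuousAt.eventually_lt continuousAt_const hc',
        continuousAt_const.eventually_lt hb.continuousAt hx4] with y h1 h2
      exact ⟨h1, fun h3 => absurd h3 (not_lt.mpr h2.le)⟩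
  obtain ⟨a, ha⟩ := exists_continuous_forall_mem_convex_of_local_const hS hloc
  have hb0 : Filter.Tendsto (fun y => ‖b y‖) (Filter.cocompact Ω) (nhds 0) := by
    simpa using (zero_at_infty b).norm
  let c : C₀(Ω, A) := ⟨a, by
    apply tendsto_const_nhds.congr'
    filter_upwards [hb0.eventually_lt_const (show (0 : ℝ) < ε / 4 by linarith)] with y hy
    exact ((ha y).2 hy).symm⟩
  refine ⟨g * c, ⟨c, rfl⟩, ?_⟩
  rw [← ZeroAtInftyContinuousMap.dist_toBCF_eq_dist]
  refine lt_of_le_of_lt ((BoundedContinuousFunction.dist_le (half_pos hε).le).2 fun y => ?_)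
    (half_lt_self hε)
  have h1 : dist (f y • (h * a y)) (b y) < ε / 2 := (ha y).1
  have h2 : (g * c) y = f y • (h * a y) := by
    change g y * a y = _
    rw [hg, smul_mul_assoc]
  change dist (b y) ((g * c) y) ≤ _
  rw [h2, dist_comm]
  exact h1.le
end
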